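/- arXiv:2310.18202 — 3 statements merged into one kernel-verified Lean document; each statement's English description precedes it below -/
import Mathlib

section
/- Let E : a_1 x_1 + a_2 x_2 + ... + a_k x_k = 0 be a translation-invariant equation of genus at least 2. Then there exists a constant K > 0 (depending only on E) such that for every positive integer N, R_E(N) ≤ K·√N; equivalently, every set A ⊆ {1,...,N} with |A| > K·√N contains pairwise distinct integers x_1, ..., x_k ∈ A satisfying a_1 x_1 + ... + a_k x_k = 0. -/
/-!
Let `T`, `Tᶜ` be the two zero-sum parts. Release the coefficients of each part over the times
`0, …, n`, first the positive ones and then the negative ones, so that the sums `α t` and `β t` of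
the coefficients released up to time `t` are positive for `t < n` and vanish at `t = n`.

Suppose pairs `(X t, Y t)` of elements of `A` satisfy
`α t * X (t + 1) + β t * Y (t + 1) = α t * X t + β t * Y t` for `t < n`. Giving a variable of `T`
the value `X` at its release time, and a variable of `Tᶜ` the value `Y` at its release time, one
finds by induction that the part of `∑ i, a i * x i` released up to time `t` equals
`α t * X t + β t * Y t`, which is `0` at `t = n`.

Such a walk exists because each of the forms `α t * x + β t * y` takes only `O(N)` values on
`A × A`: once `|A|²` exceeds a large multiple of `N`, discarding small fibres leaves a nonempty set
of pairs in which every fibre is large, and there the walk can always step to a pair whose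
coordinates have not been used before.
-/

open Finset

section ReleasedSum

variable {ι κ M : Type*}

/-- The sum of `f i` over the indices `i ∈ T` released up to time `t`, where `τ i` is the release
time of `i`. For coefficients `f`, these are the weights of the walk at time `t`. -/
def releasedSum [AddCommMonoid M] (T : Finset ι) (τ : ι → ℕ) (f : ι → M) (t : ℕ) : M :=
  ∑ i ∈ T with τ i ≤ t, f i

lemma releasedSum_eq_sum [AddCommMonoid M] {T : Finset ι} {τ : ι → ℕ} {n : ℕ}
    (hτ : ∀ i ∈ T, τ i ≤ n) (f : ι → M) : releasedSum T τ f n = ∑ i ∈ T, f i := by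
  rw [releasedSum, filter_true_of_mem hτ]

lemma releasedSum_succ [AddCommMonoid M] (T : Finset ι) (τ : ι → ℕ) (f : ι → M) (t : ℕ) :
    releasedSum T τ f (t + 1) = releasedSum T τ f t + ∑ i ∈ T with τ i = t + 1, f i := by
  classical
  simp only [releasedSum, Nat.le_succ_iff, filter_or]
  exact sum_union (disjoint_filter.mpr fun i _ hi => by omega)

lemma releasedSum_mul_zero [NonUnitalNonAssocSemiring M] (T : Finset ι) (τ : ι → ℕ) (f : ι → M)
    (X : ℕ → M) :
    releasedSum T τ (fun i => f i * X (τ i)) 0 = releasedSum T τ f 0 * X 0 := by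
  rw [releasedSum, releasedSum, sum_mul]
  refine sum_congr rfl fun i hi => ?_
  rw [Nat.le_zero.mp (mem_filter.mp hi).2]

lemma releasedSum_mul_succ [NonUnitalNonAssocRing M] (T : Finset ι) (τ : ι → ℕ) (f : ι → M)
    (X : ℕ → M) (t : ℕ) :
    releasedSum T τ (fun i => f i * X (τ i)) (t + 1) =
      releasedSum T τ (fun i => f i * X (τ i)) t +
        (releasedSum T τ f (t + 1) - releasedSum T τ f t) * X (t + 1) := by
  rw [releasedSum_succ, releasedSum_succ T τ f, add_sub_cancel_left, sum_mul]
  congr 1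
  exact sum_congr rfl fun i hi => by rw [(mem_filter.mp hi).2]

lemma releasedSum_mul_add_releasedSum_mul [NonUnitalNonAssocRing M] {T : Finset ι} {U : Finset κ}
    {τ : ι → ℕ} {σ : κ → ℕ} {a : ι → M} {b : κ → M} {X Y : ℕ → M} {n : ℕ}
    (hstep : ∀ t < n, releasedSum T τ a t * X (t + 1) + releasedSum U σ b t * Y (t + 1) =
      releasedSum T τ a t * X t + releasedSum U σ b t * Y t) :
    ∀ t ≤ n, releasedSum T τ (fun i => a i * X (τ i)) t + releasedSum U σ (fun j => b j * Y (σ j)) t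
      = releasedSum T τ a t * X t + releasedSum U σ b t * Y t := by
  intro t
  induction t with
  | zero => intro _; simp only [releasedSum_mul_zero]
  | succ t ih =>
    intro ht
    rw [releasedSum_mul_succ, releasedSum_mul_succ, add_add_add_comm, ih (by omega),
      ← hstep t (by omega), sub_mul, sub_mul]
    abel

lemma sum_mul_add_sum_mul_eq_zero_of_step [NonUnitalNonAssocRing M] {T : Finset ι} {U : Finset κ}
    {τ : ι → ℕ} {σ : κ → ℕ} {a : ι → M} {b : κ → M} {X Y : ℕ → M} {n : ℕ}
    (hτ : ∀ i ∈ T, τ i ≤ n) (hσ : ∀ j ∈ U, σ j ≤ n)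
    (ha : ∑ i ∈ T, a i = 0) (hb : ∑ j ∈ U, b j = 0)
    (hstep : ∀ t < n, releasedSum T τ a t * X (t + 1) + releasedSum U σ b t * Y (t + 1) =
      releasedSum T τ a t * X t + releasedSum U σ b t * Y t) :
    ∑ i ∈ T, a i * X (τ i) + ∑ j ∈ U, b j * Y (σ j) = 0 := by
  have h := releasedSum_mul_add_releasedSum_mul hstep n le_rfl
  simpa only [releasedSum_eq_sum hτ, releasedSum_eq_sum hσ, ha, hb, zero_mul, add_zero] using h

end ReleasedSum

section Schedule

lemma exists_bijOn_range_card {ι : Type*} (s : Finset ι) :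
    ∃ f : ι → ℕ, Set.BijOn f s (range #s) :=
  s.finite_toSet.exists_bijOn_of_encard_eq
    (by simp only [Set.encard_coe_eq_coe_finsetCard, card_range])

/-- Elements satisfying `P` receive the values `0, 1, …`, the others `n, n - 1, …`. -/
lemma exists_injOn_lt_of_not {ι : Type*} {T : Finset ι} (P : ι → Prop) {n : ℕ}
    (hP : ∃ i ∈ T, P i) (hnP : ∃ i ∈ T, ¬ P i) (hn : #T ≤ n) :
    ∃ τ : ι → ℕ, (∀ i ∈ T, τ i ≤ n) ∧ Set.InjOn τ T ∧
      (∀ i ∈ T, ∀ j ∈ T, P i → ¬ P j → τ i < τ j) ∧ (∃ i ∈ T, τ i = 0) ∧ ∃ i ∈ T, τ i = n := by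
  classical
  obtain ⟨f, hf⟩ := exists_bijOn_range_card {i ∈ T | P i}
  obtain ⟨g, hg⟩ := exists_bijOn_range_card {i ∈ T | ¬ P i}
  obtain ⟨τ, hτP, hτnP⟩ : ∃ τ : ι → ℕ, (∀ i, P i → τ i = f i) ∧ ∀ i, ¬ P i → τ i = n - g i :=
    ⟨fun i => if P i then f i else n - g i, fun _ hi => if_pos hi, fun _ hi => if_neg hi⟩
  have hcard : #{i ∈ T | P i} + #{i ∈ T | ¬ P i} = #T := card_filter_add_card_filter_not _
  have hf_lt : ∀ i ∈ T, P i → f i < #{i ∈ T | P i} := fun i hi hPi =>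
    mem_range.mp (hf.mapsTo (mem_filter.mpr ⟨hi, hPi⟩))
  have hg_lt : ∀ i ∈ T, ¬ P i → g i < #{i ∈ T | ¬ P i} := fun i hi hPi =>
    mem_range.mp (hg.mapsTo (mem_filter.mpr ⟨hi, hPi⟩))
  have hlt : ∀ i ∈ T, ∀ j ∈ T, P i → ¬ P j → τ i < τ j := fun i hi j hj hPi hPj => by
    have := hf_lt i hi hPi
    have := hg_lt j hj hPj
    rw [hτP i hPi, hτnP j hPj]
    omega
  refine ⟨τ, fun i hi => ?_, fun i hi j hj hij => ?_, hlt, ?_, ?_⟩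
  · by_cases hPi : P i
    · have := hf_lt i hi hPi
      rw [hτP i hPi]
      omega
    · exact (hτnP i hPi).trans_le (Nat.sub_le _ _)
  · by_cases hPi : P i <;> by_cases hPj : P j
    · rw [hτP i hPi, hτP j hPj] at hij
      exact hf.injOn (mem_filter.mpr ⟨hi, hPi⟩) (mem_filter.mpr ⟨hj, hPj⟩) hij
    · exact absurd hij (hlt i hi j hj hPi hPj).ne
    · exact absurd hij (hlt j hj i hi hPj hPi).ne'
    · refine hg.injOn (mem_filter.mpr ⟨hi, hPi⟩) (mem_filter.mpr ⟨hj, hPj⟩) ?_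
      have := hg_lt i hi hPi
      have := hg_lt j hj hPj
      rw [hτnP i hPi, hτnP j hPj] at hij
      omega
  · obtain ⟨i, hi, hi0⟩ := hf.surjOn (mem_range.mpr (card_pos.mpr (filter_nonempty_iff.mpr hP)))
    obtain ⟨hiT, hPi⟩ := mem_filter.mp hi
    exact ⟨i, hiT, (hτP i hPi).trans hi0⟩
  · obtain ⟨i, hi, hi0⟩ := hg.surjOn (mem_range.mpr (card_pos.mpr (filter_nonempty_iff.mpr hnP)))
    obtain ⟨hiT, hPi⟩ := mem_filter.mp hi
    exact ⟨i, hiT, by rw [hτnP i hPi, hi0, Nat.sub_zero]⟩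

variable {ι M : Type*} [AddCommGroup M] [LinearOrder M] [IsOrderedAddMonoid M]

lemma releasedSum_pos_of_pos_before_neg {T : Finset ι} {τ : ι → ℕ} {a : ι → M} {t : ℕ}
    (ha : ∀ i ∈ T, a i ≠ 0) (hsum : ∑ i ∈ T, a i = 0)
    (hτ : ∀ i ∈ T, ∀ j ∈ T, 0 < a i → a j < 0 → τ i < τ j)
    (hfirst : ∃ i ∈ T, τ i ≤ t) (hlast : ∃ i ∈ T, t < τ i) : 0 < releasedSum T τ a t := by
  obtain ⟨i, hi, hit⟩ := hfirst
  by_cases hneg : ∃ j ∈ T, τ j ≤ t ∧ a j < 0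
  · obtain ⟨j, hj, hjt, hja⟩ := hneg
    have hunreleased : ∑ l ∈ T with ¬ τ l ≤ t, a l < 0 := by
      refine sum_neg (fun l hl => ?_) (hlast.imp fun l hl => mem_filter.mpr ⟨hl.1, hl.2.not_ge⟩)
      obtain ⟨hl, hlt⟩ := mem_filter.mp hl
      refine (ha l hl).lt_of_le (not_lt.mp fun hla => hlt ?_)
      exact (hτ l hl j hj hla hja).le.trans hjt
    rw [← sum_filter_add_sum_filter_not T (τ · ≤ t), ← releasedSum] at hsum
    rw [eq_neg_of_add_eq_zero_left hsum]
    exact neg_pos.mpr hunreleased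
  · push Not at hneg
    refine sum_pos (fun l hl => ?_) ⟨i, mem_filter.mpr ⟨hi, hit⟩⟩
    obtain ⟨hl, hlt⟩ := mem_filter.mp hl
    exact (ha l hl).symm.lt_of_le (hneg l hl hlt)

lemma exists_injOn_releasedSum_pos {T : Finset ι} {a : ι → M} {n : ℕ} (hT : T.Nonempty)
    (ha : ∀ i ∈ T, a i ≠ 0) (hsum : ∑ i ∈ T, a i = 0) (hn : #T ≤ n) :
    ∃ τ : ι → ℕ, (∀ i ∈ T, τ i ≤ n) ∧ Set.InjOn τ T ∧ ∀ t < n, 0 < releasedSum T τ a t := by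
  have hex : ∃ i ∈ T, a i ≠ 0 := hT.imp fun i hi => ⟨hi, ha i hi⟩
  obtain ⟨p, hpT, hp⟩ := exists_pos_of_sum_zero_of_exists_nonzero a hsum hex
  obtain ⟨m, hmT, hm⟩ := exists_pos_of_sum_zero_of_exists_nonzero (fun i => -a i)
    (by rw [sum_neg_distrib, hsum, neg_zero]) (by simpa only [ne_eq, neg_eq_zero] using hex)
  obtain ⟨τ, hτn, hτ, hlt, ⟨i, hi, hi0⟩, ⟨j, hj, hjn⟩⟩ := exists_injOn_lt_of_not (0 < a ·)
    ⟨p, hpT, hp⟩ ⟨m, hmT, (neg_pos.mp hm).not_gt⟩ hn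
  exact ⟨τ, hτn, hτ, fun t ht => releasedSum_pos_of_pos_before_neg ha hsum
    (fun i hi j hj hai haj => hlt i hi j hj hai haj.not_gt)
    ⟨i, hi, hi0.trans_le t.zero_le⟩ ⟨j, hj, ht.trans_eq hjn.symm⟩⟩

end Schedule

section LargeFibers

/-- A subset minimal for the property `D * ∑ t ∈ I, #(H.image (φ t)) < #H` works: deleting a fibre
with at most `D` elements removes a value of one of the maps, hence preserves the property. -/
lemma exists_subset_forall_lt_card_fiber {κ X Y : Type*} [DecidableEq Y] {I : Finset κ}
    {φ : κ → X → Y} {D : ℕ} {G : Finset X} (hG : D * ∑ t ∈ I, #(G.image (φ t)) < #G) :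
    ∃ H ⊆ G, H.Nonempty ∧ ∀ t ∈ I, ∀ p ∈ H, D < #{q ∈ H | φ t q = φ t p} := by
  obtain ⟨H, hHG, hH⟩ := exists_minimal_le_of_wellFoundedLT
    (fun H : Finset X => D * ∑ t ∈ I, #(H.image (φ t)) < #H) G hG
  refine ⟨H, hHG, card_pos.mp (Nat.zero_lt_of_lt hH.prop), fun t ht p hp => ?_⟩
  by_contra! hsmall
  set H' : Finset X := {q ∈ H | φ t q ≠ φ t p}
  have hsub : H' ⊆ H := filter_subset _ _
  have hcard : #{q ∈ H | φ t q = φ t p} + #H' = #H := card_filter_add_card_filter_not _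
  have himage : ∑ s ∈ I, #(H'.image (φ s)) < ∑ s ∈ I, #(H.image (φ s)) := by
    refine sum_lt_sum (fun s _ => card_le_card (image_subset_image hsub)) ⟨t, ht, ?_⟩
    suffices H'.image (φ t) ⊆ (H.image (φ t)).erase (φ t p) from
      card_lt_card (this.trans_ssubset (erase_ssubset (mem_image_of_mem _ hp)))
    intro y hy
    obtain ⟨q, hq, rfl⟩ := mem_image.mp hy
    obtain ⟨hqH, hqp⟩ := mem_filter.mp hq
    exact mem_erase.mpr ⟨hqp, mem_image_of_mem _ hqH⟩
  have hprop : D * ∑ s ∈ I, #(H'.image (φ s)) < #H' := by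
    have := Nat.mul_le_mul_left D (Nat.succ_le_of_lt himage)
    rw [Nat.mul_succ] at this
    have := hH.prop
    omega
  have hpH' : p ∈ H' := hH.le_of_le hprop hsub hp
  exact (mem_filter.mp hpH').2 rfl

end LargeFibers

section Walk

lemma exists_walk_of_forall_exists_step {X : Type*} {H : Set X} {step : ℕ → X → X → Prop}
    {r : X → X → Prop} {n : ℕ} (hH : H.Nonempty)
    (h : ∀ t < n, ∀ p ∈ H, ∀ s : Finset X, #s ≤ n → ∃ q ∈ H, step t p q ∧ ∀ x ∈ s, r x q) :
    ∃ w : ℕ → X, (∀ t ≤ n, w t ∈ H) ∧ (∀ t < n, step t (w t) (w (t + 1))) ∧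
      ∀ s t, s < t → t ≤ n → r (w s) (w t) := by
  classical
  suffices ∀ m ≤ n, ∃ w : ℕ → X, (∀ t ≤ m, w t ∈ H) ∧ (∀ t < m, step t (w t) (w (t + 1))) ∧
      ∀ s t, s < t → t ≤ m → r (w s) (w t) from this n le_rfl
  intro m
  induction m with
  | zero =>
    obtain ⟨p, hp⟩ := hH
    exact fun _ => ⟨fun _ => p, fun _ _ => hp, fun _ ht => absurd ht (Nat.not_lt_zero _),
      fun s t hst ht => absurd (hst.trans_le ht) (Nat.not_lt_zero _)⟩
  | succ m ih =>
    intro hm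
    obtain ⟨w, hmem, hstep, hr⟩ := ih (by omega)
    obtain ⟨q, hqH, hq, hqr⟩ := h m hm (w m) (hmem m le_rfl) ((range (m + 1)).image w)
      (card_image_le.trans (by rwa [card_range]))
    have hold : ∀ t ≤ m, Function.update w (m + 1) q t = w t := fun t ht =>
      Function.update_of_ne (by omega) _ _
    have hnew : Function.update w (m + 1) q (m + 1) = q := Function.update_self _ _ _
    refine ⟨Function.update w (m + 1) q, fun t ht => ?_, fun t ht => ?_, fun s t hst ht => ?_⟩
    · obtain ht | rfl := Nat.le_succ_iff.mp ht
      · rw [hold t ht]; exact hmem t ht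
      · rwa [hnew]
    · obtain ht | rfl := Nat.lt_succ_iff_lt_or_eq.mp ht
      · rw [hold t ht.le, hold (t + 1) ht]; exact hstep t ht
      · rwa [hold t le_rfl, hnew]
    · rw [hold s (by omega)]
      obtain ht | rfl := Nat.le_succ_iff.mp ht
      · rw [hold t ht]; exact hr s t hst ht
      · rw [hnew]; exact hqr _ (mem_image_of_mem w (mem_range.mpr hst))

variable {R : Type*} [DecidableEq R]

/-- The set of coordinates of a pair; two points of a walk with disjoint `coords` supply distinct
values to all variables read off from them. -/
def coords (p : R × R) : Finset R := {p.1, p.2}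

lemma fst_mem_coords (p : R × R) : p.1 ∈ coords p := mem_insert_self _ _

lemma snd_mem_coords (p : R × R) : p.2 ∈ coords p := mem_insert_of_mem (mem_singleton_self _)

lemma card_coords_le (p : R × R) : #(coords p) ≤ 2 := card_le_two

/-- On a line `α * x + β * y = c` with `α, β ≠ 0`, each value is taken at most once by each
coordinate. -/
lemma exists_mem_disjoint_coords [Ring R] [NoZeroDivisors R] {α β c : R} (hα : α ≠ 0) (hβ : β ≠ 0)
    {L : Finset (R × R)} (hL : ∀ q ∈ L, α * q.1 + β * q.2 = c) {S : Finset R} (hS : 2 * #S < #L) :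
    ∃ q ∈ L, Disjoint S (coords q) := by
  by_contra! hmeet
  have hfst : #{q ∈ L | q.1 ∈ S} ≤ #S := by
    refine card_le_card_of_injOn Prod.fst (fun q hq => (mem_filter.mp hq).2) fun q hq r hr hqr => ?_
    have h := (hL q (mem_filter.mp hq).1).trans (hL r (mem_filter.mp hr).1).symm
    rw [hqr, add_right_inj] at h
    exact Prod.ext hqr (mul_left_cancel₀ hβ h)
  have hsnd : #{q ∈ L | q.2 ∈ S} ≤ #S := by
    refine card_le_card_of_injOn Prod.snd (fun q hq => (mem_filter.mp hq).2) fun q hq r hr hqr => ?_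
    have h := (hL q (mem_filter.mp hq).1).trans (hL r (mem_filter.mp hr).1).symm
    rw [hqr, add_left_inj] at h
    exact Prod.ext (mul_left_cancel₀ hα h) hqr
  have hcover : L ⊆ {q ∈ L | q.1 ∈ S} ∪ {q ∈ L | q.2 ∈ S} := by
    intro q hq
    have := hmeet q hq
    simp only [coords, disjoint_insert_right, disjoint_singleton_right] at this
    simp only [mem_union, mem_filter]
    tauto
  have := (card_le_card hcover).trans (card_union_le _ _)
  omega

/-- A walk `w 0, …, w n` in a set `G` of pairs whose `t`-th step stays on a level set of the linear
form `α t * x + β t * y`, and no two of whose points share a coordinate. The values of `w` beyond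
time `n` are irrelevant. -/
structure IsFreshWalk [Ring R] (G : Finset (R × R)) (α β : ℕ → R) (n : ℕ) (w : ℕ → R × R) :
    Prop where
  mem : ∀ t ≤ n, w t ∈ G
  step : ∀ t < n, α t * (w (t + 1)).1 + β t * (w (t + 1)).2 = α t * (w t).1 + β t * (w t).2
  pairwiseDisjoint : (Set.Iic n).PairwiseDisjoint fun t => coords (w t)

lemma exists_isFreshWalk_of_lt_card_fiber [Ring R] [NoZeroDivisors R] {α β : ℕ → R} {n : ℕ}
    (hα : ∀ t < n, α t ≠ 0) (hβ : ∀ t < n, β t ≠ 0) {H : Finset (R × R)} (hH : H.Nonempty)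
    (hfib : ∀ t < n, ∀ p ∈ H,
      4 * n < #{q ∈ H | α t * q.1 + β t * q.2 = α t * p.1 + β t * p.2}) :
    ∃ w, IsFreshWalk H α β n w := by
  obtain ⟨w, hmem, hstep, hdisj⟩ := exists_walk_of_forall_exists_step (H := (H : Set (R × R)))
    (step := fun t p q => α t * q.1 + β t * q.2 = α t * p.1 + β t * p.2)
    (r := fun p q => Disjoint (coords p) (coords q)) hH (n := n) fun t ht p hp s hs => by
      have hused : #(s.biUnion coords) ≤ #s * 2 :=
        card_biUnion_le_card_mul s coords 2 fun q _ => card_coords_le q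
      obtain ⟨q, hq, hqs⟩ := exists_mem_disjoint_coords (hα t ht) (hβ t ht)
        (L := {q ∈ H | α t * q.1 + β t * q.2 = α t * p.1 + β t * p.2}) (S := s.biUnion coords)
        (fun q hq => (mem_filter.mp hq).2) (by have := hfib t ht p hp; omega)
      exact ⟨q, (mem_filter.mp hq).1, (mem_filter.mp hq).2, (disjoint_biUnion_left _ _ _).mp hqs⟩
  refine ⟨w, hmem, hstep, fun s hs t ht hst => ?_⟩
  rcases hst.lt_or_gt with h | h
  · exact hdisj s t h ht
  · exact (hdisj t s h hs).symm

lemma IsFreshWalk.mono [Ring R] {G H : Finset (R × R)} {α β : ℕ → R} {n : ℕ} {w : ℕ → R × R}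
    (hw : IsFreshWalk H α β n w) (hHG : H ⊆ G) : IsFreshWalk G α β n w :=
  ⟨fun t ht => hHG (hw.mem t ht), hw.step, hw.pairwiseDisjoint⟩

variable {ι : Type*} [DecidableEq ι] {A : Finset R} {T : Finset ι} {τ σ : ι → ℕ} {n : ℕ}
  {w : ℕ → R × R}

lemma IsFreshWalk.injective_piecewise [Ring R] {α β : ℕ → R}
    (hw : IsFreshWalk A.offDiag α β n w) (hτ : ∀ i ∈ T, τ i ≤ n) (hσ : ∀ i ∉ T, σ i ≤ n)
    (hτT : Set.InjOn τ T) (hσT : Set.InjOn σ (T : Set ι)ᶜ) :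
    Function.Injective (T.piecewise (fun i => (w (τ i)).1) fun i => (w (σ i)).2) := by
  rw [← piecewise_coe, Set.injective_piecewise_iff]
  refine ⟨fun i hi j hj hij => hτT hi hj ?_, fun i hi j hj hij => hσT hi hj ?_,
    fun i hi j hj hij => ?_⟩
  · exact hw.pairwiseDisjoint.elim_finset (hτ i hi) (hτ j hj) _ (fst_mem_coords _)
      (by rw [show (w (τ i)).1 = (w (τ j)).1 from hij]; exact fst_mem_coords _)
  · exact hw.pairwiseDisjoint.elim_finset (hσ i hi) (hσ j hj) _ (snd_mem_coords _)
      (by rw [show (w (σ i)).2 = (w (σ j)).2 from hij]; exact snd_mem_coords _)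
  · have htime : τ i = σ j := hw.pairwiseDisjoint.elim_finset (hτ i hi) (hσ j hj) _
      (fst_mem_coords _) (hij ▸ snd_mem_coords _)
    rw [htime] at hij
    exact (mem_offDiag.mp (hw.mem (σ j) (hσ j hj))).2.2 hij

lemma IsFreshWalk.exists_injective_solution [Ring R] [Fintype ι] {a : ι → R}
    (hw : IsFreshWalk A.offDiag (releasedSum T τ a) (releasedSum Tᶜ σ a) n w)
    (hT : ∑ i ∈ T, a i = 0) (hTc : ∑ i ∈ Tᶜ, a i = 0)
    (hτ : ∀ i ∈ T, τ i ≤ n) (hσ : ∀ i ∈ Tᶜ, σ i ≤ n)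
    (hτT : Set.InjOn τ T) (hσT : Set.InjOn σ (Tᶜ : Finset ι)) :
    ∃ x : ι → R, Function.Injective x ∧ (∀ i, x i ∈ A) ∧ ∑ i, a i * x i = 0 := by
  refine ⟨T.piecewise (fun i => (w (τ i)).1) fun i => (w (σ i)).2, ?_, fun i => ?_, ?_⟩
  · exact hw.injective_piecewise hτ (fun i hi => hσ i (mem_compl.mpr hi)) hτT
      (by rwa [coe_compl] at hσT)
  · by_cases hi : i ∈ T
    · rw [piecewise_eq_of_mem _ _ _ hi]
      exact (mem_offDiag.mp (hw.mem _ (hτ i hi))).1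
    · rw [piecewise_eq_of_notMem _ _ _ hi]
      exact (mem_offDiag.mp (hw.mem _ (hσ i (mem_compl.mpr hi)))).2.1
  · rw [← sum_add_sum_compl T, ← sum_mul_add_sum_mul_eq_zero_of_step (X := fun t => (w t).1)
      (Y := fun t => (w t).2) hτ hσ hT hTc hw.step]
    congr 1
    · exact sum_congr rfl fun i hi => by rw [piecewise_eq_of_mem _ _ _ hi]
    · exact sum_congr rfl fun i hi => by rw [piecewise_eq_of_notMem _ _ _ (mem_compl.mp hi)]

end Walk

section Counting

lemma card_image_linearForm_le {G : Finset (ℤ × ℤ)} {M N : ℕ}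
    (hG : G ⊆ Icc 1 (N : ℤ) ×ˢ Icc 1 (N : ℤ)) {α β : ℤ} (hα : 0 < α) (hβ : 0 < β) (hαM : α ≤ M)
    (hβM : β ≤ M) : #(G.image fun q => α * q.1 + β * q.2) ≤ 2 * M * N := by
  have hterm : ∀ {γ x : ℤ}, 0 < γ → γ ≤ M → x ∈ Icc 1 (N : ℤ) → 0 < γ * x ∧ γ * x ≤ M * N := by
    intro γ x hγ hγM hx
    obtain ⟨hx1, hxN⟩ := mem_Icc.mp hx
    exact ⟨mul_pos hγ hx1, mul_le_mul hγM hxN (by omega) (by omega)⟩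
  have hsub : G.image (fun q => α * q.1 + β * q.2) ⊆ Icc 1 ((2 * M * N : ℕ) : ℤ) := by
    refine image_subset_iff.mpr fun q hq => ?_
    obtain ⟨hq1, hq2⟩ := mem_product.mp (hG hq)
    have hx := hterm hα hαM hq1
    have hy := hterm hβ hβM hq2
    push_cast
    exact mem_Icc.mpr ⟨by linarith, by linarith⟩
  simpa only [Int.card_Icc, add_sub_cancel_right, Int.toNat_natCast] using card_le_card hsub

lemma mul_lt_card_offDiag_of_mul_sqrt_lt {X : Type*} {A : Finset X} {c N : ℕ}
    (hN : 0 < N) (hA : (c + 1) * √N < #A) : c * N < #A.offDiag := by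
  have hsqrt : 1 ≤ √(N : ℝ) := Real.one_le_sqrt.mpr (by exact_mod_cast hN)
  have hcsqrt : 0 ≤ c * √(N : ℝ) := by positivity
  have hreal : (c * N : ℝ) < #A * (#A - 1) := calc
    (c * N : ℝ) = √N * (c * √N) := by linear_combination -(c : ℝ) * Real.sq_sqrt N.cast_nonneg
    _ < #A * (#A - 1) := mul_lt_mul'' (by linarith) (by linarith) (by positivity) hcsqrt
  have hnat : c * N + #A < #A * #A := by
    rify
    linarith
  rw [offDiag_card]
  omega

lemma exists_isFreshWalk {A : Finset ℤ} {M N n : ℕ} (hA : A ⊆ Icc 1 (N : ℤ)) {α β : ℕ → ℤ}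
    (hα : ∀ t < n, 0 < α t) (hβ : ∀ t < n, 0 < β t) (hαM : ∀ t, α t ≤ M) (hβM : ∀ t, β t ≤ M)
    (hcard : 8 * n ^ 2 * M * N < #A.offDiag) : ∃ w, IsFreshWalk A.offDiag α β n w := by
  have hbox : A.offDiag ⊆ Icc 1 (N : ℤ) ×ˢ Icc 1 (N : ℤ) := fun q hq =>
    have ⟨hq1, hq2, _⟩ := mem_offDiag.mp hq
    mem_product.mpr ⟨hA hq1, hA hq2⟩
  have himage : ∑ t ∈ range n, #(A.offDiag.image fun q => α t * q.1 + β t * q.2) ≤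
      n * (2 * M * N) := by
    refine (sum_le_card_nsmul _ _ _ fun t ht => ?_).trans_eq (by rw [card_range, smul_eq_mul])
    have htn := mem_range.mp ht
    exact card_image_linearForm_le hbox (hα t htn) (hβ t htn) (hαM t) (hβM t)
  obtain ⟨H, hHA, hH, hfib⟩ := exists_subset_forall_lt_card_fiber (D := 4 * n) (I := range n)
    (φ := fun t (q : ℤ × ℤ) => α t * q.1 + β t * q.2) (G := A.offDiag) <| calc
      _ ≤ 4 * n * (n * (2 * M * N)) := Nat.mul_le_mul_left _ himage
      _ = 8 * n ^ 2 * M * N := by ring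
      _ < _ := hcard
  obtain ⟨w, hw⟩ := exists_isFreshWalk_of_lt_card_fiber (fun t ht => (hα t ht).ne')
    (fun t ht => (hβ t ht).ne') hH fun t ht => hfib t (mem_range.mpr ht)
  exact ⟨w, hw.mono hHA⟩

end Counting

lemma releasedSum_le_sum_natAbs {ι : Type*} [Fintype ι] (T : Finset ι) (τ : ι → ℕ) (a : ι → ℤ)
    (t : ℕ) : releasedSum T τ a t ≤ (∑ i, (a i).natAbs : ℕ) := by
  calc
    releasedSum T τ a t ≤ ∑ i ∈ T with τ i ≤ t, |a i| := sum_le_sum fun i _ => le_abs_self (a i)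
    _ ≤ ∑ i, |a i| := sum_le_univ_sum_of_nonneg fun i => abs_nonneg (a i)
    _ = (∑ i, (a i).natAbs : ℕ) := by simp only [Nat.cast_sum, Int.natCast_natAbs]

/-- Let `E : a₁x₁ + ⋯ + a_k x_k = 0` be a translation-invariant equation
(all coefficients nonzero, summing to zero) of genus at least 2 (here expressed as the
existence of a partition of the index set into two nonempty parts, each with zero
coefficient sum; this is equivalent to genus ≥ 2).  Then there is a constant `K > 0`
such that for every `N ≥ 1`, every `A ⊆ {1, …, N}` with `|A| > K·√N` contains pairwise
distinct integers `x₁, …, x_k` with `a₁x₁ + ⋯ + a_k x_k = 0`. -/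
theorem stmt_0 (k : ℕ) (a : Fin k → ℤ)
    (ha : ∀ i, a i ≠ 0) (hsum : ∑ i, a i = 0)
    (hgenus : ∃ T : Finset (Fin k), T.Nonempty ∧ Tᶜ.Nonempty ∧
      ∑ i ∈ T, a i = 0 ∧ ∑ i ∈ Tᶜ, a i = 0) :
    ∃ K : ℝ, 0 < K ∧ ∀ N : ℕ, 0 < N → ∀ A : Finset ℤ,
      (∀ x ∈ A, x ∈ Finset.Icc (1 : ℤ) N) →
      K * Real.sqrt N < (A.card : ℝ) →
      ∃ x : Fin k → ℤ, Function.Injective x ∧ (∀ i, x i ∈ A) ∧ ∑ i, a i * x i = 0 := by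
  obtain ⟨T, hT, hTc, hTsum, hTcsum⟩ := hgenus
  obtain ⟨τ, hτk, hτ, hα⟩ := exists_injOn_releasedSum_pos hT (fun i _ => ha i) hTsum
    (card_finset_fin_le T)
  obtain ⟨σ, hσk, hσ, hβ⟩ := exists_injOn_releasedSum_pos hTc (fun i _ => ha i) hTcsum
    (card_finset_fin_le Tᶜ)
  set M : ℕ := ∑ i, (a i).natAbs
  refine ⟨(8 * k ^ 2 * M : ℕ) + 1, by positivity, fun N hN A hA hcard => ?_⟩
  obtain ⟨w, hw⟩ := exists_isFreshWalk hA hα hβ (releasedSum_le_sum_natAbs T τ a)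
    (releasedSum_le_sum_natAbs Tᶜ σ a) (mul_lt_card_offDiag_of_mul_sqrt_lt hN hcard)
  exact hw.exists_injective_solution hTsum hTcsum hτk hσk hτ hσ
end

section
/- Every translation-invariant equation of genus at least 2 is abundant: if E : a_1 x_1 + ... + a_ℓ x_ℓ = 0 is a translation-invariant equation in ℓ variables of genus at least 2, then there exist constants γ, C > 0 (depending only on E) such that for every ε ∈ (0,1) and every positive integer N, every subset A ⊆ {1,...,N} with |A| ≥ ε·N contains at least γ·ε^C·N^{ℓ−1} solutions (x_1,...,x_ℓ) ∈ A^ℓ to E. -/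
/-!
Pick a representative `ρ i` of the part containing `i`. As every part has coefficient sum zero, the
equation reads `∑ i, a i * (x i - x (ρ i)) = 0`, and its terms can be introduced one at a time,
starting from the trivial equation `a p * (x p - x (ρ p)) = 0`.

To introduce the term of `k`, with `r = ρ k`, consider pairs `(u, w)` of solutions of the old
equation for which `a p * x p + a k * x r` takes the same value at `u` and `w`. Replacing `u p` by
`w p` and `u k` by `w r` turns `u` into a solution of the new equation. By Cauchy–Schwarz there are
many such pairs, and a fixed new solution comes from few of them, provided that the old equation
involves a variable besides `x p` and `x r`. The first such variable, when the first term from a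
second part is introduced, is `x (ρ p)`: this is where the genus hypothesis enters.
-/

open Finset Function

theorem sq_card_le_card_image_mul_card_filter_eq {α β : Type*} [DecidableEq β] (s : Finset α)
    (f : α → β) :
    #s ^ 2 ≤ #(s.image f) * #{v ∈ s ×ˢ s | f v.1 = f v.2} := by
  have card_pairs : #{v ∈ s ×ˢ s | f v.1 = f v.2} = ∑ b ∈ s.image f, #{u ∈ s | f u = b} ^ 2 := by
    rw [card_eq_sum_card_fiberwise (f := fun v ↦ f v.1) (t := s.image f)]
    · refine sum_congr rfl fun b _ ↦ ?_
      rw [sq, ← card_product, ← filter_product, filter_filter]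
      congr 1
      grind
    · intro v hv
      have hv := mem_product.1 (mem_filter.1 (mem_coe.1 hv)).1
      exact mem_coe.2 (mem_image_of_mem f hv.1)
  rw [card_pairs, card_eq_sum_card_image f s]
  exact sq_sum_le_card_mul_sum_sq

section DotProduct

variable {ι R : Type*} [Fintype ι] [Ring R]

theorem dotProduct_update [DecidableEq ι] (b x : ι → R) (p : ι) (t : R) :
    b ⬝ᵥ update x p t = b ⬝ᵥ x + b p * (t - x p) := by
  have update_eq : update x p t = x + Pi.single p (t - x p) := by
    ext i
    by_cases hi : i = p
    · subst hi; simp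
    · simp [hi]
  rw [update_eq, dotProduct_add, dotProduct_single]

theorem eq_of_dotProduct_eq [NoZeroDivisors R] {b x y : ι → R} {q : ι} (hq : b q ≠ 0)
    (hxy : ∀ i ≠ q, x i = y i) (h : b ⬝ᵥ x = b ⬝ᵥ y) : x = y := by
  classical
  have hy : y = update x q (y q) := (update_eq_iff.2 ⟨rfl, hxy⟩).symm
  rw [hy, dotProduct_update, left_eq_add, mul_eq_zero, sub_eq_zero] at h
  rw [hy, h.resolve_left hq, update_eq_self]

end DotProduct

section Counting

variable {ι R : Type*} [Fintype ι] [DecidableEq ι] [Ring R] [DecidableEq R]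

/-- The solutions in `A` of the linear equation `∑ i, a i * x i = 0`. -/
def solutions (a : ι → R) (A : Finset R) : Finset (ι → R) :=
  {x ∈ Fintype.piFinset fun _ ↦ A | a ⬝ᵥ x = 0}

theorem mem_solutions {a : ι → R} {A : Finset R} {x : ι → R} :
    x ∈ solutions a A ↔ (∀ i, x i ∈ A) ∧ a ⬝ᵥ x = 0 := by
  simp only [solutions, mem_filter, Fintype.mem_piFinset]

theorem pow_le_card_solutions_single_sub_single {p r : ι} (hpr : p ≠ r) (c : R) (A : Finset R) :
    #A ^ (Fintype.card ι - 1) ≤ #(solutions (Pi.single p c - Pi.single r c) A) := by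
  let e (i : ι) : {i // i ≠ r} := if hi : i = r then ⟨p, hpr⟩ else ⟨i, hi⟩
  have he : Surjective e := fun i ↦ ⟨i, dif_neg i.2⟩
  have hpr' : e p = e r := by simp [e, hpr]
  calc #A ^ (Fintype.card ι - 1)
      = #(Fintype.piFinset fun _ : {i // i ≠ r} ↦ A) := by
        simp only [Fintype.card_piFinset, prod_const, card_univ, ne_eq, Fintype.card_subtype_compl,
          Fintype.card_subtype_eq]
    _ ≤ #(solutions (Pi.single p c - Pi.single r c) A) := by
        refine card_le_card_of_injOn (· ∘ e) (fun y hy ↦ ?_) he.injective_comp_right.injOn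
        rw [mem_coe, Fintype.mem_piFinset] at hy
        refine mem_coe.2 (mem_solutions.2 ⟨fun i ↦ hy (e i), ?_⟩)
        rw [sub_dotProduct, single_dotProduct, single_dotProduct]
        simp only [comp_apply, hpr', sub_self]

/-- The exchange `(u, w) ↦ x` that turns pairs of solutions of an equation in which `x k` does not
occur into solutions of an equation with an additional multiple of `x k - x r`. -/
def exchange (p r k : ι) (v : (ι → R) × (ι → R)) : ι → R :=
  update (update v.1 p (v.2 p)) k (v.2 r)

theorem exchange_mem_solutions {b : ι → R} {p r k : ι} (hpr : p ≠ r) (hkr : k ≠ r)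
    (hk : b k = 0) (c : R) {A : Finset R} {v : (ι → R) × (ι → R)}
    (hu : v.1 ∈ solutions b A) (hw : v.2 ∈ solutions b A)
    (huw : b p * v.1 p + c * v.1 r = b p * v.2 p + c * v.2 r) :
    exchange p r k v ∈ solutions (b + Pi.single k c - Pi.single r c) A := by
  rw [mem_solutions] at hu hw ⊢
  refine ⟨fun i ↦ ?_, ?_⟩
  · simp only [exchange, update_apply]
    split_ifs
    exacts [hw.1 r, hw.1 p, hu.1 i]
  · rw [sub_dotProduct, add_dotProduct, single_dotProduct, single_dotProduct, exchange,
      dotProduct_update, dotProduct_update, hu.2, hk, update_self, update_of_ne hkr.symm,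
      update_of_ne hpr.symm, mul_sub, zero_mul, zero_add, add_zero, eq_sub_of_add_eq huw]
    abel

variable [NoZeroDivisors R]

theorem card_solutions_eqOn_le {b : ι → R} {F : Finset ι} {q : ι} (hqF : q ∉ F) (hq : b q ≠ 0)
    (A : Finset R) (z : ι → R) :
    #{x ∈ solutions b A | ∀ i ∈ F, x i = z i} ≤ #A ^ (Fintype.card ι - (#F + 1)) := by
  calc #{x ∈ solutions b A | ∀ i ∈ F, x i = z i}
      ≤ #(Fintype.piFinset fun _ : ↥(insert q F)ᶜ ↦ A) := by
        refine card_le_card_of_injOn (insert q F)ᶜ.restrict (fun x hx ↦ ?_) fun x hx y hy hxy ↦ ?_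
        · have hx := (mem_solutions.1 (mem_filter.1 (mem_coe.1 hx)).1).1
          exact mem_coe.2 (Fintype.mem_piFinset.2 fun i ↦ hx i)
        · obtain ⟨hx, hxz⟩ := mem_filter.1 (mem_coe.1 hx)
          obtain ⟨hy, hyz⟩ := mem_filter.1 (mem_coe.1 hy)
          refine eq_of_dotProduct_eq hq (fun i hi ↦ ?_)
            ((mem_solutions.1 hx).2.trans (mem_solutions.1 hy).2.symm)
          by_cases hiF : i ∈ F
          · rw [hxz i hiF, hyz i hiF]
          · exact congrFun hxy ⟨i, by simp [hi, hiF]⟩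
    _ = #A ^ (Fintype.card ι - (#F + 1)) := by
        rw [Fintype.card_piFinset, prod_const, card_univ, Fintype.card_coe, card_compl,
          card_insert_of_notMem hqF]

theorem card_exchange_fiber_le {b : ι → R} {p r k q : ι} (hpr : p ≠ r) (hkp : k ≠ p)
    (hp : b p ≠ 0) (hqp : q ≠ p) (hqr : q ≠ r) (hq : b q ≠ 0) (A : Finset R) (x : ι → R) :
    #{v ∈ solutions b A ×ˢ solutions b A | exchange p r k v = x} ≤
      #A ^ (Fintype.card ι - 2) := by
  have card_three : #{q, p, r} = 3 := card_eq_three.2 ⟨q, p, r, hqp, hqr, hpr, rfl⟩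
  have three_le : 3 ≤ Fintype.card ι := card_three ▸ card_le_univ _
  calc #{v ∈ solutions b A ×ˢ solutions b A | exchange p r k v = x}
      ≤ #({u ∈ solutions b A | ∀ i ∈ ({p, k} : Finset ι)ᶜ, u i = x i} ×ˢ
          {w ∈ solutions b A | ∀ i ∈ ({p, r} : Finset ι), w i = update x r (x k) i}) := by
        refine card_le_card fun v hv ↦ ?_
        obtain ⟨huw, rfl⟩ := mem_filter.1 hv
        rw [mem_product] at huw ⊢
        refine ⟨mem_filter.2 ⟨huw.1, fun i hi ↦ ?_⟩, mem_filter.2 ⟨huw.2, fun i hi ↦ ?_⟩⟩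
        · simp only [mem_compl, mem_insert, mem_singleton, not_or] at hi
          simp [exchange, hi]
        · rw [mem_insert, mem_singleton] at hi
          obtain rfl | rfl := hi <;> simp [exchange, hpr, hkp.symm]
    _ ≤ #A ^ (Fintype.card ι - (#({p, k} : Finset ι)ᶜ + 1)) *
          #A ^ (Fintype.card ι - (#{p, r} + 1)) := by
        rw [card_product]
        exact Nat.mul_le_mul (card_solutions_eqOn_le (by simp) hp A x)
          (card_solutions_eqOn_le (by simp [hqp, hqr]) hq A _)
    _ = #A ^ (Fintype.card ι - 2) := by
        rw [← pow_add, card_compl, card_pair hkp.symm, card_pair hpr]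
        congr 1
        omega

theorem sq_card_solutions_le {b : ι → R} {p r k q : ι} (hpr : p ≠ r) (hkr : k ≠ r)
    (hk : b k = 0) (hp : b p ≠ 0) (hqp : q ≠ p) (hqr : q ≠ r) (hq : b q ≠ 0) (c : R)
    (A : Finset R) :
    #(solutions b A) ^ 2 ≤ #((A ×ˢ A).image fun t ↦ b p * t.1 + c * t.2) *
      (#A ^ (Fintype.card ι - 2) * #(solutions (b + Pi.single k c - Pi.single r c) A)) := by
  have hkp : k ≠ p := fun h ↦ hp (h ▸ hk)
  refine (sq_card_le_card_image_mul_card_filter_eq (solutions b A)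
    fun u ↦ b p * u p + c * u r).trans (Nat.mul_le_mul (card_le_card ?_) ?_)
  · refine image_subset_iff.2 fun u hu ↦ mem_image.2 ⟨(u p, u r), ?_, rfl⟩
    exact mem_product.2 ⟨(mem_solutions.1 hu).1 p, (mem_solutions.1 hu).1 r⟩
  · refine card_le_mul_card_image_of_maps_to (f := exchange p r k) (fun v hv ↦ ?_) _ fun x _ ↦ ?_
    · simp only [mem_filter, mem_product] at hv
      exact exchange_mem_solutions hpr hkr hk c hv.1.1 hv.1.2 hv.2
    · exact (card_le_card (filter_subset_filter _ (filter_subset _ _))).trans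
        (card_exchange_fiber_le hpr hkp hp hqp hqr hq A x)

end Counting

theorem apply_ne_of_apply_ne_self {ι : Type*} {ρ : ι → ι} (hρ : ∀ i, ρ (ρ i) = ρ i) {j : ι}
    (hj : ρ j ≠ j) (i : ι) : ρ i ≠ j := by
  rintro rfl
  exact hj (hρ i)

theorem exists_mem_ne_of_sum_eq_zero {κ M : Type*} [AddCommMonoid M] {T : Finset κ} {a : κ → M}
    (hT : ∑ i ∈ T, a i = 0) {p : κ} (hp : p ∈ T) (hap : a p ≠ 0) : ∃ i ∈ T, i ≠ p := by
  by_contra! h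
  rw [eq_singleton_iff_unique_mem.2 ⟨hp, h⟩, sum_singleton] at hT
  exact hap hT

section RootedCoeff

variable {ι M : Type*} [DecidableEq ι] [AddCommGroup M]

/-- The coefficients of the equation `∑ i ∈ s, a i * (x i - x (ρ i)) = 0`. -/
def rootedCoeff (a : ι → M) (ρ : ι → ι) (s : Finset ι) : ι → M :=
  ∑ i ∈ s, (Pi.single i (a i) - Pi.single (ρ i) (a i))

variable {a : ι → M} {ρ : ι → ι}

theorem rootedCoeff_singleton (p : ι) :
    rootedCoeff a ρ {p} = Pi.single p (a p) - Pi.single (ρ p) (a p) :=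
  sum_singleton _ _

theorem rootedCoeff_insert {s : Finset ι} {k : ι} (hk : k ∉ s) :
    rootedCoeff a ρ (insert k s) =
      rootedCoeff a ρ s + Pi.single k (a k) - Pi.single (ρ k) (a k) := by
  rw [rootedCoeff, sum_insert hk, add_comm, add_sub_assoc, rootedCoeff]

theorem rootedCoeff_apply_of_forall_ne (s : Finset ι) {j : ι} (hj : ∀ i, ρ i ≠ j) :
    rootedCoeff a ρ s j = if j ∈ s then a j else 0 := by
  simp [rootedCoeff, Finset.sum_apply, Pi.single_apply, (hj _).symm]

theorem rootedCoeff_univ [Fintype ι] (h : ∀ r, ∑ i with ρ i = r, a i = 0) :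
    rootedCoeff a ρ univ = a := by
  ext j
  rw [rootedCoeff, Finset.sum_apply]
  simp only [Pi.sub_apply, Pi.single_apply, sum_sub_distrib, sum_ite_eq, mem_univ, if_true]
  rw [← sum_filter, sub_eq_self]
  simpa only [eq_comm] using h j

end RootedCoeff

theorem card_image_linear_form_le {N : ℕ} {A : Finset ℤ} (hA : A ⊆ Icc 1 (N : ℤ)) (b c : ℤ) :
    #((A ×ˢ A).image fun t ↦ b * t.1 + c * t.2) ≤ 2 * ((b.natAbs + c.natAbs) * N) + 1 := by
  let M : ℕ := (b.natAbs + c.natAbs) * N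
  have abs_le_of_mem {x : ℤ} (hx : x ∈ A) : |x| ≤ N := by
    have := mem_Icc.1 (hA hx)
    exact abs_le.2 ⟨by omega, this.2⟩
  have image_subset : (A ×ˢ A).image (fun t ↦ b * t.1 + c * t.2) ⊆ Icc (-M : ℤ) M := by
    refine image_subset_iff.2 fun t ht ↦ mem_Icc.2 (abs_le.1 ?_)
    rw [mem_product] at ht
    calc |b * t.1 + c * t.2| ≤ |b| * |t.1| + |c| * |t.2| := by
          simpa only [abs_mul] using abs_add_le (b * t.1) (c * t.2)
      _ ≤ |b| * N + |c| * N := by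
          gcongr
          exacts [abs_le_of_mem ht.1, abs_le_of_mem ht.2]
      _ = M := by simp only [M]; push_cast; ring
  calc #((A ×ˢ A).image fun t ↦ b * t.1 + c * t.2) ≤ #(Icc (-M : ℤ) M) := card_le_card image_subset
    _ = 2 * M + 1 := by rw [Int.card_Icc]; omega

section Abundance

variable {ι : Type*} [Fintype ι] [DecidableEq ι]

/-- Abundance of the equation `∑ i, a i * x i = 0`: a subset of `{1, …, N}` of density at least `ε`
contains at least `γ * ε ^ C * N ^ (ℓ - 1)` solutions, where `ℓ` is the number of variables and
`γ`, `C` depend on `a` only. Coefficients may vanish, in which case the corresponding variables are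
free but still counted. -/
def IsAbundant (a : ι → ℤ) : Prop :=
  ∃ γ C : ℝ, 0 < γ ∧ 0 < C ∧ ∀ ε : ℝ, 0 < ε → ε < 1 → ∀ N : ℕ, 0 < N →
    ∀ A : Finset ℤ, (∀ x ∈ A, x ∈ Icc (1 : ℤ) N) → ε * N ≤ (#A : ℝ) →
      γ * ε ^ C * (N : ℝ) ^ (Fintype.card ι - 1) ≤ (#(solutions a A) : ℝ)

theorem isAbundant_single_sub_single {p r : ι} (hpr : p ≠ r) (c : ℤ) :
    IsAbundant (Pi.single p c - Pi.single r c) := by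
  have one_lt_card : 1 < Fintype.card ι := Fintype.one_lt_card_iff.2 ⟨p, r, hpr⟩
  refine ⟨1, (Fintype.card ι - 1 : ℕ), one_pos, by exact_mod_cast Nat.sub_pos_of_lt one_lt_card,
    fun ε hε _ N _ A _ hAε ↦ ?_⟩
  calc 1 * ε ^ ((Fintype.card ι - 1 : ℕ) : ℝ) * (N : ℝ) ^ (Fintype.card ι - 1)
      = (ε * N) ^ (Fintype.card ι - 1) := by rw [Real.rpow_natCast, one_mul, mul_pow]
    _ ≤ (#A : ℝ) ^ (Fintype.card ι - 1) := by gcongr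
    _ ≤ #(solutions (Pi.single p c - Pi.single r c) A) := by
        exact_mod_cast pow_le_card_solutions_single_sub_single hpr c A

theorem IsAbundant.add_single_sub_single {b : ι → ℤ} (hb : IsAbundant b) {p r k q : ι}
    (hpr : p ≠ r) (hkr : k ≠ r) (hk : b k = 0) (hp : b p ≠ 0) (hqp : q ≠ p) (hqr : q ≠ r)
    (hq : b q ≠ 0) (c : ℤ) :
    IsAbundant (b + Pi.single k c - Pi.single r c) := by
  obtain ⟨γ, C, hγ, hC, h⟩ := hb
  obtain ⟨m, hm⟩ : ∃ m, Fintype.card ι = m + 2 :=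
    Nat.exists_eq_add_of_le' (Fintype.one_lt_card_iff.2 ⟨p, r, hpr⟩)
  have card_sub_one : Fintype.card ι - 1 = m + 1 := by omega
  let K : ℕ := 2 * ((b p).natAbs + c.natAbs) + 1
  have hK : 0 < (K : ℝ) := Nat.cast_pos.2 (Nat.succ_pos _)
  refine ⟨γ ^ 2 / K, C * 2, by positivity, by positivity, fun ε hε hε1 N hN A hA hAε ↦ ?_⟩
  set S := #(solutions b A)
  set S' := #(solutions (b + Pi.single k c - Pi.single r c) A)
  have card_le : #A ≤ N := by simpa using card_le_card (t := Icc (1 : ℤ) N) hA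
  have sq_le : S ^ 2 ≤ K * N * (N ^ m * S') := by
    calc S ^ 2 ≤ _ := sq_card_solutions_le hpr hkr hk hp hqp hqr hq c A
      _ ≤ (2 * (((b p).natAbs + c.natAbs) * N) + 1) * (N ^ (Fintype.card ι - 2) * S') := by
          gcongr
          exact card_image_linear_form_le hA (b p) c
      _ ≤ K * N * (N ^ m * S') := by
          rw [hm, Nat.add_sub_cancel, ← mul_assoc 2]
          refine Nat.mul_le_mul_right _ ?_
          rw [add_one_mul]
          gcongr
          exact hN
  have le_S : γ * ε ^ C * (N : ℝ) ^ (m + 1) ≤ S :=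
    card_sub_one ▸ h ε hε hε1 N hN A hA hAε
  rw [card_sub_one, Real.rpow_mul hε.le, Real.rpow_two]
  refine le_of_mul_le_mul_left ?_ (by positivity : 0 < K * (N : ℝ) ^ (m + 1))
  calc K * (N : ℝ) ^ (m + 1) * (γ ^ 2 / K * (ε ^ C) ^ 2 * (N : ℝ) ^ (m + 1))
      = (γ * ε ^ C * (N : ℝ) ^ (m + 1)) ^ 2 := by field_simp
    _ ≤ (S : ℝ) ^ 2 := by gcongr
    _ ≤ K * N * (N ^ m * S') := by exact_mod_cast sq_le
    _ = K * (N : ℝ) ^ (m + 1) * S' := by ring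

variable {a : ι → ℤ} {ρ : ι → ι}

theorem isAbundant_rootedCoeff_pair (hρ : ∀ i, ρ (ρ i) = ρ i) {p q : ι} (hp : ρ p ≠ p)
    (hq : ρ q ≠ q) (hpq : ρ p ≠ ρ q) (hap : a p ≠ 0) : IsAbundant (rootedCoeff a ρ {q, p}) := by
  have hp' := apply_ne_of_apply_ne_self hρ hp
  have hq' := apply_ne_of_apply_ne_self hρ hq
  have hqp : q ≠ p := fun h ↦ hpq (congrArg ρ h.symm)
  rw [rootedCoeff_insert (by simpa using hqp), rootedCoeff_singleton]
  refine (isAbundant_single_sub_single hp.symm (a p)).add_single_sub_single (p := p) (q := ρ p)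
    (hp' q).symm hq.symm ?_ ?_ hp hpq ?_ (a q)
  · simp [hqp, (hq' p).symm]
  · simpa [hp.symm] using hap
  · simpa [hp] using hap

theorem isAbundant_of_retraction (hρ : ∀ i, ρ (ρ i) = ρ i) (h : ∀ r, ∑ i with ρ i = r, a i = 0)
    {p q : ι} (hp : ρ p ≠ p) (hq : ρ q ≠ q) (hpq : ρ p ≠ ρ q) (hap : a p ≠ 0) (haq : a q ≠ 0) :
    IsAbundant a := by
  have hp' := apply_ne_of_apply_ne_self hρ hp
  have hq' := apply_ne_of_apply_ne_self hρ hq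
  have hqp : q ≠ p := fun h ↦ hpq (congrArg ρ h.symm)
  suffices key : ∀ s, IsAbundant (rootedCoeff a ρ (s ∪ {q, p})) by
    simpa only [union_eq_left.2 (subset_univ _), rootedCoeff_univ h] using key univ
  intro s
  induction s using Finset.induction_on with
  | empty => simpa only [empty_union] using isAbundant_rootedCoeff_pair hρ hp hq hpq hap
  | insert k s _ ih =>
    rw [insert_union]
    by_cases hk : k ∈ s ∪ {q, p}
    · rwa [insert_eq_of_mem hk]
    rw [rootedCoeff_insert hk]
    by_cases hρk : ρ k = k
    · rwa [hρk, add_sub_cancel_right]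
    refine ih.add_single_sub_single (p := p) (q := q) (hp' k).symm (Ne.symm hρk) ?_ ?_ hqp
      (hq' k).symm ?_ (a k)
    · rw [rootedCoeff_apply_of_forall_ne _ (apply_ne_of_apply_ne_self hρ hρk), if_neg hk]
    · simpa [rootedCoeff_apply_of_forall_ne _ hp'] using hap
    · simpa [rootedCoeff_apply_of_forall_ne _ hq'] using haq

theorem stmt_1_general {T : Finset ι} (hT : ∑ i ∈ T, a i = 0)
    (hTc : ∑ i ∈ Tᶜ, a i = 0) (hp : ∃ p ∈ T, a p ≠ 0) (hq : ∃ q ∈ Tᶜ, a q ≠ 0) :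
    IsAbundant a := by
  obtain ⟨p, hpT, hap⟩ := hp
  obtain ⟨q, hqT, haq⟩ := hq
  obtain ⟨r, hrT, hrp⟩ := exists_mem_ne_of_sum_eq_zero hT hpT hap
  obtain ⟨t, htT, htq⟩ := exists_mem_ne_of_sum_eq_zero hTc hqT haq
  rw [mem_compl] at hqT htT
  have hrt : r ≠ t := ne_of_mem_of_not_mem hrT htT
  let ρ (i : ι) : ι := if i ∈ T then r else t
  have ρ_of_mem {i : ι} (hi : i ∈ T) : ρ i = r := if_pos hi
  have ρ_of_notMem {i : ι} (hi : i ∉ T) : ρ i = t := if_neg hi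
  refine isAbundant_of_retraction (ρ := ρ) (p := p) (q := q) (fun i ↦ ?_) (fun j ↦ ?_) ?_ ?_ ?_
    hap haq
  · by_cases hi : i ∈ T <;> simp [ρ, hi, hrT, htT]
  · calc ∑ i with ρ i = j, a i
        = (∑ i ∈ T, if r = j then a i else 0) + ∑ i ∈ Tᶜ, if t = j then a i else 0 := by
          rw [sum_filter, ← sum_add_sum_compl T]
          congr 1 <;> refine sum_congr rfl fun i hi ↦ ?_
          · rw [ρ_of_mem hi]
          · rw [ρ_of_notMem (mem_compl.1 hi)]
      _ = 0 := by split_ifs <;> simp only [hT, hTc, sum_const_zero, add_zero]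
  · rwa [ρ_of_mem hpT]
  · rwa [ρ_of_notMem hqT]
  · rwa [ρ_of_mem hpT, ρ_of_notMem hqT]

end Abundance

/-- Every translation-invariant equation of genus at least 2 is abundant:
if `E : a₁x₁ + ⋯ + a_ℓ x_ℓ = 0` has nonzero coefficients summing to zero and genus at
least 2 (expressed as the existence of a partition of the index set into two nonempty
parts each with zero coefficient sum, which is equivalent), then there are constants
`γ, C > 0` such that for every `ε ∈ (0,1)` and every `N ≥ 1`, every `A ⊆ {1,…,N}` with
`|A| ≥ εN` contains at least `γ·ε^C·N^(ℓ-1)` solutions `(x₁,…,x_ℓ) ∈ A^ℓ` of `E`. -/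
theorem stmt_1 (ℓ : ℕ) (a : Fin ℓ → ℤ)
    (ha : ∀ i, a i ≠ 0) (hsum : ∑ i, a i = 0)
    (hgenus : ∃ T : Finset (Fin ℓ), T.Nonempty ∧ Tᶜ.Nonempty ∧
      ∑ i ∈ T, a i = 0 ∧ ∑ i ∈ Tᶜ, a i = 0) :
    ∃ γ C : ℝ, 0 < γ ∧ 0 < C ∧ ∀ ε : ℝ, 0 < ε → ε < 1 → ∀ N : ℕ, 0 < N →
      ∀ A : Finset ℤ, (∀ x ∈ A, x ∈ Finset.Icc (1 : ℤ) N) →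
        ε * N ≤ (A.card : ℝ) →
        γ * ε ^ C * (N : ℝ) ^ (ℓ - 1) ≤
          (((Fintype.piFinset (fun _ : Fin ℓ => A)).filter
            (fun x => ∑ i, a i * x i = 0)).card : ℝ) := by
  obtain ⟨T, ⟨p, hp⟩, ⟨q, hq⟩, hT, hTc⟩ := hgenus
  have h : IsAbundant a := stmt_1_general hT hTc ⟨p, hp, ha p⟩ ⟨q, hq, ha q⟩
  rwa [IsAbundant, Fintype.card_fin] at h
end

section
/- Let F and G be graphs such that F has at least one edge and there is no homomorphism from F to G. Then there exists a graph H such that H is F-abundant and there is no homomorphism from H to G. -/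
/-- `G` contains a copy of `F`, i.e. a subgraph isomorphic to `F`
(equivalently an injective graph homomorphism from `F`). -/
def ContainsCopy {α β : Type*} (F : SimpleGraph α) (G : SimpleGraph β) : Prop :=
  ∃ f : F →g G, Function.Injective f

/-- The number of copies of `H` in `G`, i.e. the number of subgraphs of `G`
isomorphic to `H`. -/
noncomputable def copyCount {α β : Type*} (H : SimpleGraph α) (G : SimpleGraph β) : ℕ :=
  {G' : G.Subgraph | Nonempty (H ≃g G'.coe)}.ncard

/-- `G` is `ε`-far from `F`-free: every graph obtained from `G` by deleting fewer than
`ε·|V(G)|²` edges still contains a copy of `F`. -/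
def FarFromFree {α β : Type*} (F : SimpleGraph α) (G : SimpleGraph β) (ε : ℝ) : Prop :=
  ∀ G' : SimpleGraph β, G' ≤ G →
    ((G.edgeSet \ G'.edgeSet).ncard : ℝ) < ε * (Nat.card β : ℝ) ^ 2 →
    ContainsCopy F G'

/-- `H` is `F`-abundant: there are constants `c, C > 0` such that for every `ε ∈ (0,1)`
and all sufficiently large `n`, every `n`-vertex graph that is `ε`-far from `F`-free
contains at least `c·ε^C·n^{|V(H)|}` copies of `H`. -/
def Abundant {α β : Type*} (F : SimpleGraph α) (H : SimpleGraph β) : Prop :=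
  ∃ c C : ℝ, 0 < c ∧ 0 < C ∧ ∀ ε : ℝ, 0 < ε → ε < 1 → ∃ n₀ : ℕ, ∀ n : ℕ, n₀ ≤ n →
    ∀ G : SimpleGraph (Fin n), FarFromFree F G ε →
      c * ε ^ C * (n : ℝ) ^ (Nat.card β) ≤ (copyCount H G : ℝ)

/-!
In a graph that is `ε`-far from `F`-free, a maximal family `S` of edge-disjoint copies of `F` has
`Ω(ε n²)` members. Discarding rare positions makes `S` rich: a vertex `a` at which some member puts
`u` carries `Ω(ε n)` members with `u` at `a`, and, if `uv` is an edge of `F`, then `Ω(ε² n²)`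
members put `v` at a neighbour of `a`. This allows building abundant graphs with vertices labelled
by `V(F)`: take one new vertex for each vertex of `F`, and join the new vertex `u` to the vertices
labelled `v` of any abundant labelled graph, which we embed by means of those `Ω(ε² n²)` members.
The new vertices span no edge, so each can be placed independently at `Ω(ε n)` positions.

That the graph obtained in this way has no homomorphism to `G` is achieved by induction on lists
`L u ⊆ V(G)` of colours allowed at the label `u`. As the colours of the new vertices do not form a
homomorphism from `F` to `G`, some edge `uv` of `F` has new vertices whose colours are not adjacent
in `G`; then the vertices labelled `v` that are joined to the new vertex `u` must avoid the colour
`c` of the new vertex `v`. Joining, for each dart `uv` and each `c ∈ L v`, a graph that works for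
the lists without `c` at `v` thus leads to a contradiction.
-/

section Counting

/-- Repeatedly discarding all members that carry a rare label costs at most `δ` per label. -/
lemma exists_subset_forall_le_ncard_fiber {ι κ : Type*} [Finite κ] (r : ι → κ → Prop) {S : Set ι}
    (hS : S.Finite) {δ : ℝ} (hδ : 0 ≤ δ) :
    ∃ T ⊆ S, S.ncard - δ * Nat.card κ ≤ (T.ncard : ℝ) ∧
      ∀ x ∈ T, ∀ k, r x k → δ ≤ ({y ∈ T | r y k}.ncard : ℝ) := by
  let labels (T : Set ι) : Set κ := {k | ∃ x ∈ T, r x k}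
  obtain ⟨T, hTS, hmax⟩ := Set.exists_max_image S.powerset
    (fun T => (T.ncard : ℝ) - δ * (labels T).ncard) hS.finite_subsets
    ⟨S, Set.mem_powerset subset_rfl⟩
  refine ⟨T, hTS, ?_, fun x hx k hxk => ?_⟩
  · have hlabels : ((labels S).ncard : ℝ) ≤ Nat.card κ := mod_cast Set.ncard_le_card _
    have hle := hmax S (Set.mem_powerset subset_rfl)
    have hnonneg : 0 ≤ δ * (labels T).ncard := by positivity
    linarith [mul_le_mul_of_nonneg_left hlabels hδ]
  · by_contra! hlt
    let fiber : Set ι := {y ∈ T | r y k}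
    have hsplit : (T \ fiber).ncard + fiber.ncard = T.ncard :=
      Set.ncard_sdiff_add_ncard_of_subset (Set.sep_subset _ _) (hS.subset hTS)
    have hlabels : (labels (T \ fiber)).ncard < (labels T).ncard := by
      refine Set.ncard_lt_ncard ⟨fun l ⟨y, hy, hyl⟩ => ⟨y, hy.1, hyl⟩, fun hsub => ?_⟩
      obtain ⟨y, hy, hyk⟩ := hsub ⟨x, hx, hxk⟩
      exact hy.2 ⟨hy.1, hyk⟩
    have hle := hmax (T \ fiber) (Set.sdiff_subset.trans hTS)
    have hsplit' : ((T \ fiber).ncard : ℝ) + fiber.ncard = T.ncard := mod_cast hsplit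
    have hlabels' : ((labels (T \ fiber)).ncard : ℝ) + 1 ≤ (labels T).ncard := mod_cast hlabels
    linarith [mul_le_mul_of_nonneg_left hlabels' hδ]

lemma natCard_mul_le_natCard_sigma {ι : Type*} {β : ι → Type*} [Finite ι] [∀ i, Finite (β i)]
    {b : ℝ} (hb : ∀ i, b ≤ Nat.card (β i)) : Nat.card ι * b ≤ Nat.card (Σ i, β i) := by
  have := Fintype.ofFinite ι
  rw [Nat.card_sigma, Nat.cast_sum, Nat.card_eq_fintype_card, ← nsmul_eq_mul]
  exact Finset.card_nsmul_le_sum _ _ _ fun i _ => hb i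

lemma prod_le_natCard_pi {ι : Type*} {β : ι → Type*} [Fintype ι] {b : ι → ℝ}
    (hb₀ : ∀ i, 0 ≤ b i) (hb : ∀ i, b i ≤ Nat.card (β i)) :
    ∏ i, b i ≤ Nat.card (∀ i, β i) := by
  rw [Nat.card_pi, Nat.cast_prod]
  exact Finset.prod_le_prod (fun i _ => hb₀ i) fun i _ => hb i

end Counting

section Copies

variable {α β V : Type*} {F : SimpleGraph α} {H : SimpleGraph β} {Γ : SimpleGraph V}

lemma copyCount_congr {β' : Type*} {H' : SimpleGraph β'} (e : H ≃g H') (Γ : SimpleGraph V) :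
    copyCount H Γ = copyCount H' Γ := by
  unfold copyCount
  congr 1
  ext Γ'
  exact ⟨fun ⟨i⟩ => ⟨e.symm.trans i⟩, fun ⟨i⟩ => ⟨e.trans i⟩⟩

lemma ContainsCopy.trans (hFH : ContainsCopy F H) (hH : ContainsCopy H Γ) : ContainsCopy F Γ := by
  obtain ⟨f, hf⟩ := hFH
  obtain ⟨g, hg⟩ := hH
  exact ⟨g.comp f, hg.comp hf⟩

lemma FarFromFree.of_containsCopy {α' : Type*} {F' : SimpleGraph α'} {ε : ℝ}
    (hΓ : FarFromFree F Γ ε) (hF : ContainsCopy F' F) : FarFromFree F' Γ ε :=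
  fun Γ' hle hlt => hF.trans (hΓ Γ' hle hlt)

lemma Abundant.of_containsCopy {α' : Type*} {F' : SimpleGraph α'} (hH : Abundant F' H)
    (hF : ContainsCopy F' F) : Abundant F H := by
  obtain ⟨c, C, hc, hC, h⟩ := hH
  refine ⟨c, C, hc, hC, fun ε hε hε1 => ?_⟩
  obtain ⟨n₀, h⟩ := h ε hε hε1
  exact ⟨n₀, fun n hn Γ hΓ => h n hn Γ (hΓ.of_containsCopy hF)⟩

lemma Abundant.congr {β' : Type*} {H' : SimpleGraph β'} (hH : Abundant F H) (e : H ≃g H') :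
    Abundant F H' := by
  simpa only [Abundant, copyCount_congr e, Nat.card_congr e.toEquiv] using hH

/-- Up to an automorphism of `H`, an injective homomorphism is determined by its image. -/
lemma ncard_injective_hom_le [Finite β] [Finite V] (H : SimpleGraph β) (Γ : SimpleGraph V) :
    {f : H →g Γ | Function.Injective f}.ncard ≤ copyCount H Γ * (Nat.card β).factorial := by
  let images : Set Γ.Subgraph := {Γ' | Nonempty (H ≃g Γ'.coe)}
  have : Finite Γ.Subgraph := .of_injective (fun Γ' => (Γ'.verts, Γ'.Adj)) fun Γ₁ Γ₂ h =>
    SimpleGraph.Subgraph.ext (congrArg Prod.fst h) (congrArg Prod.snd h)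
  let embed (p : images × Equiv.Perm β) (x : β) : V := p.1.2.some (p.2 x)
  have hcover : (fun f : H →g Γ => ⇑f) '' {f | Function.Injective f} ⊆ Set.range embed := by
    rintro _ ⟨f, hf, rfl⟩
    let i := SimpleGraph.Copy.isoToSubgraph ⟨f, hf⟩
    let Γ' : images := ⟨_, ⟨i⟩⟩
    refine ⟨(Γ', i.toEquiv.trans Γ'.2.some.symm.toEquiv), funext fun x => ?_⟩
    exact congrArg Subtype.val (Γ'.2.some.apply_symm_apply (i x))
  calc {f : H →g Γ | Function.Injective f}.ncard
      = ((fun f : H →g Γ => ⇑f) '' {f | Function.Injective f}).ncard :=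
        (Set.ncard_image_of_injective _ DFunLike.coe_injective).symm
    _ ≤ (Set.range embed).ncard := Set.ncard_le_ncard hcover
    _ ≤ Nat.card (images × Equiv.Perm β) := by
        rw [← Set.image_univ, ← Set.ncard_univ]
        exact Set.ncard_image_le
    _ = copyCount H Γ * (Nat.card β).factorial := by
        rw [Nat.card_prod, Nat.card_perm, Nat.card_coe_set_eq]
        rfl

/-- Inclusion-exclusion for the homomorphisms and the injections among all maps `β → V`. -/
lemma natCard_hom_add_descFactorial_le [Finite β] [Finite V] (H : SimpleGraph β)
    (Γ : SimpleGraph V) :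
    Nat.card (H →g Γ) + (Nat.card V).descFactorial (Nat.card β) ≤
      {f : H →g Γ | Function.Injective f}.ncard + Nat.card V ^ Nat.card β := by
  let homs : Set (β → V) := Set.range fun f : H →g Γ => ⇑f
  let injections : Set (β → V) := {f | Function.Injective f}
  have hhoms : homs.ncard = Nat.card (H →g Γ) := by
    rw [← Nat.card_coe_set_eq, Nat.card_range_of_injective DFunLike.coe_injective]
  have hinj : injections.ncard = (Nat.card V).descFactorial (Nat.card β) := by
    have := Fintype.ofFinite β
    have := Fintype.ofFinite V
    have e : injections ≃ (β ↪ V) := Equiv.subtypeInjectiveEquivEmbedding β V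
    rw [← Nat.card_coe_set_eq, Nat.card_congr e,
      Nat.card_eq_fintype_card, Fintype.card_embedding_eq, Nat.card_eq_fintype_card,
      Nat.card_eq_fintype_card]
  have hinter : homs ∩ injections = (fun f : H →g Γ => ⇑f) '' {f | Function.Injective f} := by
    ext
    simp only [homs, injections, Set.mem_inter_iff, Set.mem_range, Set.mem_image,
      Set.mem_ofPred_eq]
    grind
  calc Nat.card (H →g Γ) + (Nat.card V).descFactorial (Nat.card β)
      = (homs ∩ injections).ncard + (homs ∪ injections).ncard := by
        rw [← hhoms, ← hinj, ← Set.ncard_union_add_ncard_inter, add_comm]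
    _ ≤ {f : H →g Γ | Function.Injective f}.ncard + Nat.card V ^ Nat.card β := by
        rw [hinter, Set.ncard_image_of_injective _ DFunLike.coe_injective, ← Nat.card_fun]
        exact Nat.add_le_add_left (Set.ncard_le_card _) _

lemma eventually_pow_sub_descFactorial_le (k : ℕ) {η : ℝ} (hη : 0 < η) :
    ∀ᶠ n : ℕ in Filter.atTop, (n : ℝ) ^ k - n.descFactorial k ≤ η * (n : ℝ) ^ k := by
  filter_upwards [(isEquivalent_descFactorial k).isLittleO.def hη] with n hn
  rw [Pi.sub_apply, Real.norm_eq_abs, Real.norm_of_nonneg (by positivity)] at hn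
  linarith [neg_le_abs ((n.descFactorial k : ℝ) - (n : ℝ) ^ k)]

lemma abundant_of_le_natCard_hom [Finite β] {c : ℝ} (hc : 0 < c) {C : ℕ}
    (hhom : ∀ ε : ℝ, 0 < ε → ∀ n : ℕ, 0 < n → ∀ Γ : SimpleGraph (Fin n), FarFromFree F Γ ε →
      c * ε ^ C * (n : ℝ) ^ Nat.card β ≤ Nat.card (H →g Γ)) :
    Abundant F H := by
  let m := Nat.card β
  have hm : (0 : ℝ) < m.factorial := mod_cast m.factorial_pos
  refine ⟨c / 2 / m.factorial, (C + 1 : ℕ), by positivity, by positivity, fun ε hε hε1 => ?_⟩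
  obtain ⟨n₀, hn₀⟩ := Filter.eventually_atTop.1
    (eventually_pow_sub_descFactorial_le m (η := c * ε ^ C / 2) (by positivity))
  refine ⟨n₀ + 1, fun n hn Γ hΓ => ?_⟩
  have hdesc := hn₀ n (by lia)
  have hhom := hhom ε hε n (by lia) Γ hΓ
  have hsplit : (Nat.card (H →g Γ) : ℝ) + n.descFactorial m ≤
      {f : H →g Γ | Function.Injective f}.ncard + (n : ℝ) ^ m := by
    have := natCard_hom_add_descFactorial_le H Γ
    rw [Nat.card_fin] at this
    exact_mod_cast this
  have hcopies : ({f : H →g Γ | Function.Injective f}.ncard : ℝ) ≤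
      copyCount H Γ * m.factorial := mod_cast ncard_injective_hom_le H Γ
  calc c / 2 / m.factorial * ε ^ ((C + 1 : ℕ) : ℝ) * (n : ℝ) ^ m
      = c / 2 * ε ^ (C + 1) * (n : ℝ) ^ m / m.factorial := by
        rw [Real.rpow_natCast]
        ring
    _ ≤ c / 2 * ε ^ C * (n : ℝ) ^ m / m.factorial := by
        gcongr ?_ * ?_ * _ / _
        exact pow_le_pow_of_le_one hε.le hε1.le C.le_succ
    _ ≤ copyCount H Γ := by
        rw [div_le_iff₀ hm]
        linarith

end Copies

section Families

variable {U V : Type*} {F : SimpleGraph U} {Γ : SimpleGraph V}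

/-- A family of homomorphisms `F →g Γ` in which no two members agree on both ends of an edge of
`F`. It plays the role of a family of edge-disjoint copies of `F` in `Γ`; members may still share
an edge of `Γ` if it is the image of different edges of `F`. -/
def EdgeInjective (S : Set (F →g Γ)) : Prop :=
  ∀ ⦃u v⦄, F.Adj u v → S.InjOn fun f => (f u, f v)

/-- The `u`-th layer of a family: the set of positions of the vertex `u` of `F`. -/
def layer (S : Set (F →g Γ)) (u : U) : Set V := (fun f => f u) '' S

/-- A family is `d`-rich if each vertex of its `u`-th layer is the position of `u` in at least `d`
members. -/
def IsRich (S : Set (F →g Γ)) (d : ℝ) : Prop :=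
  ∀ ⦃u a⦄, a ∈ layer S u → d ≤ ({f ∈ S | f u = a}.ncard : ℝ)

lemma layer_mono {S T : Set (F →g Γ)} (hTS : T ⊆ S) (u : U) : layer T u ⊆ layer S u :=
  Set.image_mono hTS

lemma EdgeInjective.mono {S T : Set (F →g Γ)} (hS : EdgeInjective S) (hTS : T ⊆ S) :
    EdgeInjective T :=
  fun _ _ huv => (hS huv).mono hTS

lemma EdgeInjective.insert {S : Set (F →g Γ)} (hS : EdgeInjective S) {f : F →g Γ}
    (hf : ∀ g ∈ S, ∀ u v, F.Adj u v → ¬ (f u = g u ∧ f v = g v)) :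
    EdgeInjective (insert f S) := by
  rintro u v huv g (rfl | hg) h (rfl | hh) heq
  · rfl
  · exact (hf h hh u v huv (Prod.mk.inj heq)).elim
  · exact (hf g hg u v huv (Prod.mk.inj heq.symm)).elim
  · exact hS huv hg hh heq

lemma exists_isRich_subset [Finite U] [Finite V] [Nonempty V] {S : Set (F →g Γ)} {ε : ℝ}
    (hε : 0 < ε) (hS : ε * (Nat.card V : ℝ) ^ 2 ≤ S.ncard) :
    ∃ T ⊆ S, T.Nonempty ∧ IsRich T (ε / (Nat.card U + 1) * Nat.card V) := by
  have hV : (0 : ℝ) < Nat.card V := mod_cast Nat.card_pos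
  obtain ⟨T, hTS, hcard, hT⟩ := exists_subset_forall_le_ncard_fiber
    (fun (f : F →g Γ) (p : U × V) => f p.1 = p.2) S.toFinite
    (δ := ε / (Nat.card U + 1) * Nat.card V) (by positivity)
  refine ⟨T, hTS, (Set.ncard_pos T.toFinite).1 (Nat.cast_pos (α := ℝ).1 ?_), ?_⟩
  · rw [Nat.card_prod, Nat.cast_mul] at hcard
    calc (0 : ℝ) < ε / (Nat.card U + 1) * (Nat.card V : ℝ) ^ 2 := by positivity
      _ = ε * (Nat.card V : ℝ) ^ 2 -
          ε / (Nat.card U + 1) * Nat.card V * (Nat.card U * Nat.card V) := by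
        field_simp
        ring
      _ ≤ T.ncard := by linarith
  · rintro u _ ⟨f, hf, rfl⟩
    exact hT f hf (u, f u) rfl

lemma EdgeInjective.ncard_layer_fiber {S : Set (F →g Γ)} (hS : EdgeInjective S) {u v : U}
    (huv : F.Adj u v) (a : V) :
    (layer {f ∈ S | f u = a} v).ncard = {f ∈ S | f u = a}.ncard :=
  Set.InjOn.ncard_image fun _ hf _ hg hv =>
    hS huv hf.1 hg.1 (Prod.ext (hf.2.trans hg.2.symm) hv)

lemma IsRich.le_ncard_layer [Finite V] {S : Set (F →g Γ)} {d : ℝ} (hS : IsRich S d)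
    (hinj : EdgeInjective S) (hne : S.Nonempty) {v : U} (hv : v ∈ F.support) :
    d ≤ (layer S v).ncard := by
  obtain ⟨f, hf⟩ := hne
  obtain ⟨u, hvu⟩ := hv
  calc d ≤ ({g ∈ S | g u = f u}.ncard : ℝ) := hS ⟨f, hf, rfl⟩
    _ = (layer {g ∈ S | g u = f u} v).ncard := by rw [hinj.ncard_layer_fiber hvu.symm]
    _ ≤ (layer S v).ncard := mod_cast Set.ncard_le_ncard (layer_mono (Set.sep_subset _ _) v)

/-- The `≥ d` members through `a` reach distinct positions of `v`, each used by `≥ d` members. -/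
lemma IsRich.sq_le_ncard_adj [Finite U] [Finite V] {S : Set (F →g Γ)} {d : ℝ} (hd : 0 ≤ d)
    (hS : IsRich S d) (hinj : EdgeInjective S) {u v : U} (huv : F.Adj u v) {a : V}
    (ha : a ∈ layer S u) : d ^ 2 ≤ ({f ∈ S | Γ.Adj a (f v)}.ncard : ℝ) := by
  let B := layer {f ∈ S | f u = a} v
  have hB : B ⊆ layer S v := layer_mono (Set.sep_subset _ _) v
  have hadj : ∀ b ∈ B, Γ.Adj a b := by
    rintro _ ⟨f, ⟨-, rfl⟩, rfl⟩
    exact f.map_adj huv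
  let forget (p : Σ b : B, {f ∈ S | f v = b}) : {f ∈ S | Γ.Adj a (f v)} :=
    ⟨p.2, p.2.2.1, p.2.2.2.symm.subst (hadj _ p.1.2)⟩
  have hforget : Function.Injective forget := by
    rintro ⟨⟨b, _⟩, f, _, hfb⟩ ⟨⟨b', _⟩, g, _, hgb⟩ h
    obtain rfl : f = g := congrArg Subtype.val h
    obtain rfl : b = b' := hfb.symm.trans hgb
    rfl
  calc d ^ 2 ≤ Nat.card B * d := by
        rw [sq, Nat.card_coe_set_eq, hinj.ncard_layer_fiber huv]
        exact mul_le_mul_of_nonneg_right (hS ha) hd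
    _ ≤ Nat.card (Σ b : B, {f ∈ S | f v = b}) :=
        natCard_mul_le_natCard_sigma fun b => by
          rw [Nat.card_coe_set_eq]
          exact hS (hB b.2)
    _ ≤ ({f ∈ S | Γ.Adj a (f v)}.ncard : ℝ) := by
        rw [← Nat.card_coe_set_eq]
        exact_mod_cast Nat.card_le_card_of_injective forget hforget

/-- If `S` is a maximal edge-injective family, then deleting all edges covered by `S`
destroys every copy of `F`. -/
lemma FarFromFree.exists_edgeInjective [Finite U] [Finite V] (hF : F.edgeSet.Nonempty) {ε : ℝ}
    (hΓ : FarFromFree F Γ ε) :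
    ∃ S : Set (F →g Γ), EdgeInjective S ∧
      ε * (Nat.card V : ℝ) ^ 2 ≤ S.ncard * F.edgeSet.ncard := by
  obtain ⟨S, hS⟩ := Set.Finite.exists_maximal (s := {S : Set (F →g Γ) | EdgeInjective S})
    (Set.toFinite _) ⟨∅, fun _ _ _ => Set.injOn_empty _⟩
  refine ⟨S, hS.prop, ?_⟩
  by_contra! hlt
  let covered : Set (Sym2 V) := (fun p : (F →g Γ) × Sym2 U => p.2.map p.1) '' (S ×ˢ F.edgeSet)
  have hcovered : covered.ncard ≤ S.ncard * F.edgeSet.ncard :=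
    (Set.ncard_image_le (Set.toFinite _)).trans Set.ncard_prod.le
  have hdeleted : (Γ.edgeSet \ (Γ.deleteEdges covered).edgeSet).ncard ≤ covered.ncard := by
    refine Set.ncard_le_ncard ?_
    rw [SimpleGraph.edgeSet_deleteEdges, Set.sdiff_sdiff_right_self]
    exact Set.inter_subset_right
  obtain ⟨f, -⟩ := hΓ (Γ.deleteEdges covered) (SimpleGraph.deleteEdges_le _)
    (lt_of_le_of_lt (mod_cast hdeleted.trans hcovered) hlt)
  let f' : F →g Γ := (SimpleGraph.Hom.ofLE (SimpleGraph.deleteEdges_le _)).comp f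
  have hf' : ∀ g ∈ S, ∀ u v, F.Adj u v → ¬ (f' u = g u ∧ f' v = g v) := by
    rintro g hg u v huv ⟨hu, hv⟩
    refine (SimpleGraph.deleteEdges_adj.1 (f.map_adj huv)).2 ⟨(g, s(u, v)), ⟨hg, huv⟩, ?_⟩
    exact congrArg₂ (fun a b => s(a, b)) hu.symm hv.symm
  have hmem : f' ∈ S := hS.mem_of_prop_insert (hS.prop.insert hf')
  obtain ⟨⟨u, v⟩, huv⟩ := hF
  exact hf' f' hmem u v huv ⟨rfl, rfl⟩

end Families

section Gadget

variable {U V W I : Type*} {Wi : I → Type*} {F : SimpleGraph U} {Γ : SimpleGraph V}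

/-- The homomorphisms from `K` to `Γ` which put each vertex `x` of `K` into the layer of `S`
prescribed by the label `τ x`. -/
def layeredHoms (S : Set (F →g Γ)) (K : SimpleGraph W) (τ : W → U) : Set (K →g Γ) :=
  {h | ∀ x, h x ∈ layer S (τ x)}

/-- The gadget built from graphs `K i` labelled by vertices of `F`, one for each `i : I`, and
darts `d i` of `F`: to the disjoint union of all `K i` we add one new vertex for each vertex of
`F`, and join the new vertex `(d i).fst` to the vertices of `K i` labelled `(d i).snd`. -/
def gadget (d : I → F.Dart) (K : ∀ i, SimpleGraph (Wi i)) (τ : ∀ i, Wi i → U) :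
    SimpleGraph (U ⊕ Σ i, Wi i) :=
  ⨆ i, (K i).map ((Function.Embedding.sigmaMk i).trans .inr) ⊔
    ⨆ (x) (_ : τ i x = (d i).snd), SimpleGraph.edge (.inl (d i).fst) (.inr ⟨i, x⟩)

/-- The labelling of the gadget by vertices of `F` that extends the labellings of its parts. -/
def gadgetLabel (τ : ∀ i, Wi i → U) : (U ⊕ Σ i, Wi i) → U :=
  Sum.elim id fun x => τ x.1 x.2

lemma gadget_le_iff {d : I → F.Dart} {K : ∀ i, SimpleGraph (Wi i)} {τ : ∀ i, Wi i → U}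
    {H : SimpleGraph (U ⊕ Σ i, Wi i)} :
    gadget d K τ ≤ H ↔ ∀ i, (∀ x y, (K i).Adj x y → H.Adj (.inr ⟨i, x⟩) (.inr ⟨i, y⟩)) ∧
      ∀ x, τ i x = (d i).snd → H.Adj (.inl (d i).fst) (.inr ⟨i, x⟩) := by
  simp only [gadget, iSup_le_iff, sup_le_iff, SimpleGraph.map_le_iff_le_comap,
    SimpleGraph.edge_le_iff, reduceCtorEq, false_or]
  rfl

variable {d : I → F.Dart} {K : ∀ i, SimpleGraph (Wi i)} {τ : ∀ i, Wi i → U}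

lemma gadget_adj_inr (i : I) {x y : Wi i} (hxy : (K i).Adj x y) :
    (gadget d K τ).Adj (.inr ⟨i, x⟩) (.inr ⟨i, y⟩) :=
  (gadget_le_iff.1 le_rfl i).1 x y hxy

lemma gadget_adj_inl_inr (i : I) {x : Wi i} (hx : τ i x = (d i).snd) :
    (gadget d K τ).Adj (.inl (d i).fst) (.inr ⟨i, x⟩) :=
  (gadget_le_iff.1 le_rfl i).2 x hx

/-- Choose the positions `a u` of the new vertices freely in the layers of `S`, and then each
part `K i` inside the subfamily that puts `(d i).snd` next to `a (d i).fst`. -/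
lemma natCard_sigma_le_ncard_layeredHoms_gadget [Finite U] [Finite V] [Finite I]
    [∀ i, Finite (Wi i)] (d : I → F.Dart) (K : ∀ i, SimpleGraph (Wi i)) (τ : ∀ i, Wi i → U)
    (S : Set (F →g Γ)) :
    Nat.card (Σ a : ∀ u, layer S u,
      ∀ i, layeredHoms {f ∈ S | Γ.Adj (a (d i).fst) (f (d i).snd)} (K i) (τ i)) ≤
    (layeredHoms S (gadget d K τ) (gadgetLabel τ)).ncard := by
  let glue (p : Σ a : ∀ u, layer S u,
      ∀ i, layeredHoms {f ∈ S | Γ.Adj (a (d i).fst) (f (d i).snd)} (K i) (τ i)) :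
      layeredHoms S (gadget d K τ) (gadgetLabel τ) := by
    let h : (U ⊕ Σ i, Wi i) → V := Sum.elim (fun u => p.1 u) fun x => (p.2 x.1).1 x.2
    have hle : gadget d K τ ≤ Γ.comap h := gadget_le_iff.2 fun i => by
      refine ⟨fun x y hxy => (p.2 i).1.map_adj hxy, fun x hx => ?_⟩
      obtain ⟨f, ⟨-, hadj⟩, (hfx : f (τ i x) = (p.2 i).1 x)⟩ := (p.2 i).2 x
      rw [← hx, hfx] at hadj
      exact hadj
    refine ⟨⟨h, fun hab => hle hab⟩, ?_⟩
    rintro (u | ⟨i, x⟩)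
    · exact (p.1 u).2
    · exact layer_mono (Set.sep_subset _ _) _ ((p.2 i).2 x)
  have hglue : Function.Injective glue := by
    rintro ⟨a, h⟩ ⟨a', h'⟩ heq
    have heq (z : U ⊕ Σ i, Wi i) : (glue ⟨a, h⟩).1 z = (glue ⟨a', h'⟩).1 z := by rw [heq]
    obtain rfl : a = a' := funext fun u => Subtype.ext (heq (.inl u))
    obtain rfl : h = h' :=
      funext fun i => Subtype.ext (RelHom.ext fun x => heq (.inr ⟨i, x⟩))
    rfl
  rw [← Nat.card_coe_set_eq]
  exact Nat.card_le_card_of_injective glue hglue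

lemma IsRich.le_ncard_layeredHoms_gadget [Finite U] [Finite V] [Fintype I]
    [∀ i, Finite (Wi i)] {S : Set (F →g Γ)} {r : ℝ} (hr : 0 ≤ r) (hS : IsRich S r)
    (hinj : EdgeInjective S) (hne : S.Nonempty) (hF : ∀ u, u ∈ F.support) {b : I → ℝ}
    (hb₀ : ∀ i, 0 ≤ b i)
    (hb : ∀ i, ∀ R ⊆ S, r ^ 2 ≤ R.ncard → b i ≤ (layeredHoms R (K i) (τ i)).ncard) :
    r ^ Nat.card U * ∏ i, b i ≤ (layeredHoms S (gadget d K τ) (gadgetLabel τ)).ncard := by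
  have := Fintype.ofFinite U
  have hlayers : r ^ Nat.card U ≤ Nat.card (∀ u, layer S u) := by
    rw [Nat.card_eq_fintype_card, ← Finset.card_univ, ← Finset.prod_const]
    refine prod_le_natCard_pi (fun _ => hr) fun u => ?_
    rw [Nat.card_coe_set_eq]
    exact hS.le_ncard_layer hinj hne (hF u)
  have hparts (a : ∀ u, layer S u) : ∏ i, b i ≤ Nat.card (∀ i, layeredHoms
      {f ∈ S | Γ.Adj (a (d i).fst) (f (d i).snd)} (K i) (τ i)) := by
    refine prod_le_natCard_pi hb₀ fun i => ?_
    rw [Nat.card_coe_set_eq]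
    exact hb i _ (Set.sep_subset _ _) (hS.sq_le_ncard_adj hr hinj (d i).adj (a _).2)
  calc r ^ Nat.card U * ∏ i, b i ≤ Nat.card (∀ u, layer S u) * ∏ i, b i :=
        mul_le_mul_of_nonneg_right hlayers (Finset.prod_nonneg fun i _ => hb₀ i)
    _ ≤ _ := natCard_mul_le_natCard_sigma hparts
    _ ≤ _ := mod_cast natCard_sigma_le_ncard_layeredHoms_gadget d K τ S

end Gadget

section Abundance

variable {U V W I : Type*} {Wi : I → Type*} {F : SimpleGraph U}

lemma layeredHoms_mono {Γ : SimpleGraph V} {S T : Set (F →g Γ)} (hTS : T ⊆ S) (K : SimpleGraph W)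
    (τ : W → U) : layeredHoms T K τ ⊆ layeredHoms S K τ :=
  fun _ hh x => layer_mono hTS _ (hh x)

/-- The strengthening of abundance on which the induction runs: every edge-injective family of
`ε n²` homomorphisms from `F` to an `n`-vertex graph has polynomially many, in `ε`, layered
homomorphisms from `K` relative to the labelling `τ`. -/
def FamilyAbundant (F : SimpleGraph U) (K : SimpleGraph W) (τ : W → U) : Prop :=
  ∃ c : ℝ, 0 < c ∧ ∃ C : ℕ, ∀ ε : ℝ, 0 < ε → ∀ n : ℕ, 0 < n → ∀ (Γ : SimpleGraph (Fin n))
    (S : Set (F →g Γ)), EdgeInjective S → ε * (n : ℝ) ^ 2 ≤ S.ncard →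
      c * ε ^ C * (n : ℝ) ^ Nat.card W ≤ (layeredHoms S K τ).ncard

lemma FamilyAbundant.gadget [Finite U] [Finite I] [∀ i, Finite (Wi i)]
    (hF : ∀ u, u ∈ F.support) {K : ∀ i, SimpleGraph (Wi i)} {τ : ∀ i, Wi i → U}
    (hK : ∀ i, FamilyAbundant F (K i) (τ i)) (d : I → F.Dart) :
    FamilyAbundant F (gadget d K τ) (gadgetLabel τ) := by
  have := Fintype.ofFinite I
  choose c hc C hK using hK
  let k := Nat.card U
  let D := k + ∑ i, 2 * C i
  refine ⟨(∏ i, c i) * (1 / (k + 1)) ^ D,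
    mul_pos (Finset.prod_pos fun i _ => hc i) (by positivity), D, fun ε hε n hn Γ S hS hcard => ?_⟩
  have : Nonempty (Fin n) := ⟨⟨0, hn⟩⟩
  obtain ⟨T, hTS, hTne, hT⟩ := exists_isRich_subset hε (S := S) (by rwa [Nat.card_fin])
  rw [Nat.card_fin] at hT
  let δ := ε / (k + 1)
  let r := δ * n
  have hparts (i : I) (R : Set (F →g Γ)) (hR : R ⊆ T) (hRcard : r ^ 2 ≤ R.ncard) :
      c i * (δ ^ 2) ^ C i * (n : ℝ) ^ Nat.card (Wi i) ≤ (layeredHoms R (K i) (τ i)).ncard :=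
    hK i (δ ^ 2) (by positivity) n hn Γ R (hS.mono (hR.trans hTS)) (by rwa [← mul_pow])
  calc (∏ i, c i) * (1 / (k + 1)) ^ D * ε ^ D * (n : ℝ) ^ Nat.card (U ⊕ Σ i, Wi i)
      = r ^ k * ∏ i, c i * (δ ^ 2) ^ C i * (n : ℝ) ^ Nat.card (Wi i) := by
        simp only [Finset.prod_mul_distrib, ← pow_mul, Finset.prod_pow_eq_pow_sum, Nat.card_sum,
          Nat.card_sigma, D, δ, r, k]
        ring
    _ ≤ (layeredHoms T _ (gadgetLabel τ)).ncard :=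
        hT.le_ncard_layeredHoms_gadget (by positivity) (hS.mono hTS) hTne hF
          (fun i => by have := hc i; positivity) hparts
    _ ≤ (layeredHoms S _ (gadgetLabel τ)).ncard :=
        mod_cast Set.ncard_le_ncard (layeredHoms_mono hTS _ _)

lemma FamilyAbundant.abundant [Finite U] [Finite W] (hF : F.edgeSet.Nonempty) {K : SimpleGraph W}
    {τ : W → U} (hK : FamilyAbundant F K τ) : Abundant F K := by
  obtain ⟨c, hc, C, hK⟩ := hK
  have hm : (0 : ℝ) < F.edgeSet.ncard := mod_cast hF.ncard_pos
  refine abundant_of_le_natCard_hom (c := c * (1 / F.edgeSet.ncard) ^ C) (C := C) (by positivity)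
    fun ε hε n hn Γ hΓ => ?_
  obtain ⟨S, hS, hcard⟩ := hΓ.exists_edgeInjective hF
  rw [Nat.card_fin, ← div_le_iff₀ hm, mul_div_right_comm] at hcard
  calc c * (1 / F.edgeSet.ncard) ^ C * ε ^ C * (n : ℝ) ^ Nat.card W
      = c * (ε / F.edgeSet.ncard) ^ C * (n : ℝ) ^ Nat.card W := by ring
    _ ≤ (layeredHoms S K τ).ncard := hK _ (by positivity) n hn Γ S hS hcard
    _ ≤ Nat.card (K →g Γ) := mod_cast Set.ncard_le_card _

end Abundance

section Coloring

variable {U γ : Type*} {F : SimpleGraph U} {G : SimpleGraph γ}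

/-- The colour lists on `U` obtained from `L` by removing the colour `c` from the list of `v`. -/
def eraseColor (L : U → Set γ) (v : U) (c : γ) (w : U) : Set γ := {a ∈ L w | w = v → a ≠ c}

lemma eraseColor_lt {L : U → Set γ} {v : U} {c : γ} (hc : c ∈ L v) : eraseColor L v c < L :=
  Pi.lt_def.2 ⟨fun _ => Set.sep_subset _ _, v, Set.sep_subset _ _, fun h => (h hc).2 rfl rfl⟩

lemma exists_notMem_of_gadget_hom (hFG : IsEmpty (F →g G)) {L : U → Set γ}
    {Wi : (Σ e : F.Dart, L e.snd) → Type*} {K : ∀ i, SimpleGraph (Wi i)} {τ : ∀ i, Wi i → U}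
    (hK : ∀ i, ∀ φ : K i →g G, ∃ x, φ x ∉ eraseColor L i.1.snd i.2 (τ i x))
    (φ : gadget Sigma.fst K τ →g G) : ∃ z, φ z ∉ L (gadgetLabel τ z) := by
  by_contra! hφ
  obtain ⟨e, he⟩ : ∃ e : F.Dart, ¬ G.Adj (φ (.inl e.fst)) (φ (.inl e.snd)) := by
    by_contra! hadj
    exact hFG.false ⟨fun u => φ (.inl u), fun {u v} huv => hadj ⟨(u, v), huv⟩⟩
  let i : Σ e : F.Dart, L e.snd := ⟨e, φ (.inl e.snd), hφ (.inl e.snd)⟩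
  obtain ⟨x, hx⟩ := hK i ⟨fun x => φ (.inr ⟨i, x⟩), fun hxy => φ.map_adj (gadget_adj_inr i hxy)⟩
  refine hx ⟨hφ (.inr ⟨i, x⟩), fun hxv (hxc : φ (.inr ⟨i, x⟩) = _) => he ?_⟩
  have hadj := φ.map_adj (gadget_adj_inl_inr i hxv)
  rwa [hxc] at hadj

end Coloring

lemma exists_familyAbundant_of_isEmpty_hom.{u, v} {U : Type u} {γ : Type v} [Finite U] [Finite γ]
    {F : SimpleGraph U} {G : SimpleGraph γ} (hF : ∀ u, u ∈ F.support) (hFG : IsEmpty (F →g G))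
    (L : U → Set γ) :
    ∃ (W : Type (max u v)) (_ : Finite W) (K : SimpleGraph W) (τ : W → U),
      FamilyAbundant F K τ ∧ ∀ φ : K →g G, ∃ x, φ x ∉ L (τ x) := by
  induction L using WellFoundedLT.induction with
  | ind L ih =>
    have : Finite F.Dart := .of_injective _ SimpleGraph.Dart.toProd_injective
    choose W hW K τ hK hφ using
      fun i : Σ e : F.Dart, L e.snd => ih (eraseColor L i.1.snd i.2) (eraseColor_lt i.2.2)
    exact ⟨U ⊕ Σ i, W i, inferInstance, gadget Sigma.fst K τ, gadgetLabel τ,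
      .gadget hF hK Sigma.fst, exists_notMem_of_gadget_hom hFG hφ⟩

section Support

variable {α γ : Type*} {F : SimpleGraph α} {G : SimpleGraph γ}

lemma mem_support_induce_support (u : F.support) : u ∈ (F.induce F.support).support := by
  obtain ⟨v, huv⟩ := u.2
  exact ⟨⟨v, u, huv.symm⟩, huv⟩

lemma containsCopy_induce (s : Set α) : ContainsCopy (F.induce s) F :=
  ⟨(SimpleGraph.Embedding.induce s).toHom, Subtype.val_injective⟩

lemma edgeSet_induce_support_nonempty (hF : F.edgeSet.Nonempty) :
    (F.induce F.support).edgeSet.Nonempty := by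
  obtain ⟨⟨u, v⟩, (huv : F.Adj u v)⟩ := hF
  exact ⟨s(⟨u, v, huv⟩, ⟨v, u, huv.symm⟩), huv⟩

lemma isEmpty_induce_support_hom (hF : F.edgeSet.Nonempty) (hFG : IsEmpty (F →g G)) :
    IsEmpty (F.induce F.support →g G) := by
  classical
  obtain ⟨⟨u, v⟩, (huv : F.Adj u v)⟩ := hF
  refine ⟨fun φ => hFG.false ?_⟩
  let c := φ ⟨u, v, huv⟩
  refine ⟨fun w => if hw : w ∈ F.support then φ ⟨w, hw⟩ else c, fun {a b} hab => ?_⟩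
  rw [dif_pos ⟨b, hab⟩, dif_pos ⟨a, hab.symm⟩]
  exact φ.map_adj hab

end Support

/-- If `F` has at least one edge and there is no homomorphism from
`F` to `G`, then there is a graph `H` that is `F`-abundant and admits no
homomorphism to `G`. -/
theorem stmt_2 {α γ : Type*} [Fintype α] [Fintype γ]
    (F : SimpleGraph α) (G : SimpleGraph γ)
    (hF : F.edgeSet.Nonempty) (hFG : IsEmpty (F →g G)) :
    ∃ (n : ℕ) (H : SimpleGraph (Fin n)), Abundant F H ∧ IsEmpty (H →g G) := by
  have hE := edgeSet_induce_support_nonempty hF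
  obtain ⟨W, _, K, τ, hFK, hKG⟩ := exists_familyAbundant_of_isEmpty_hom
    mem_support_induce_support (isEmpty_induce_support_hom hF hFG) fun _ => Set.univ
  have := Fintype.ofFinite W
  have e : K ≃g K.overFin rfl := K.overFinIso rfl
  exact ⟨_, _, ((hFK.abundant hE).of_containsCopy (containsCopy_induce _)).congr e,
    ⟨fun φ => (hKG (φ.comp e.toHom)).elim fun _ h => h trivial⟩⟩
end
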